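/- arXiv:1805.06218 — 7 statements merged into one kernel-verified Lean document; each statement's English description precedes it below -/
import Mathlib

section
/- Let Φ be a unital positive linear map from n×n to m×m complex matrices, let f : ℝ → ℝ be operator monotone on [0,∞), and let A, B be n×n complex matrices with m·I ≤ A ≤ M·I and m·I ≤ B ≤ M·I for some scalars 0 < m < M. Then (Φ(f(A)) + Φ(f(B)))/2 − Φ(f(A ! B)) ≤ ((M−m)²/(4Mm))·f(M)·I. -/
open Matrix ComplexOrder

/-- Loewner order: `A ≤ B` iff `B - A` is positive semidefinite. -/
def LoewnerLE {n : Type} [Fintype n] (A B : Matrix n n ℂ) : Prop := (B - A).PosSemidef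

/-- The positive square root of a (Hermitian) matrix, via the continuous functional calculus. -/
noncomputable def msqrt {n : Type} [Fintype n] [DecidableEq n] (A : Matrix n n ℂ) :
    Matrix n n ℂ := cfc Real.sqrt A

/-- The arithmetic mean `A ∇ B = (A + B)/2`. -/
noncomputable def amean {n : Type} [Fintype n] [DecidableEq n] (A B : Matrix n n ℂ) :
    Matrix n n ℂ := (2 : ℝ)⁻¹ • (A + B)

/-- The harmonic mean `A ! B = ((A⁻¹ + B⁻¹)/2)⁻¹`. -/
noncomputable def hmean {n : Type} [Fintype n] [DecidableEq n] (A B : Matrix n n ℂ) :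
    Matrix n n ℂ := ((2 : ℝ)⁻¹ • (A⁻¹ + B⁻¹))⁻¹

/-- The geometric mean `A ♯ B = A^(1/2) (A^(-1/2) B A^(-1/2))^(1/2) A^(1/2)`. -/
noncomputable def gmean {n : Type} [Fintype n] [DecidableEq n] (A B : Matrix n n ℂ) :
    Matrix n n ℂ := msqrt A * msqrt ((msqrt A)⁻¹ * B * (msqrt A)⁻¹) * msqrt A

/-- `f : ℝ → ℝ` is operator monotone on `[0,∞)`: it is continuous and nonnegative on `[0,∞)`
and monotone on positive-semidefinite complex matrices of every finite size, with `f` applied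
via the continuous functional calculus. -/
def OpMonotone (f : ℝ → ℝ) : Prop :=
  ContinuousOn f (Set.Ici 0) ∧ (∀ x : ℝ, 0 ≤ x → 0 ≤ f x) ∧
    ∀ (k : Type) [Fintype k] [DecidableEq k] (X Y : Matrix k k ℂ),
      X.PosSemidef → LoewnerLE X Y → LoewnerLE (cfc f X) (cfc f Y)

/-- `g : ℝ → ℝ` is operator monotone decreasing on `(0,∞)`: it is continuous and nonnegative on
`(0,∞)` and antitone on positive-definite complex matrices of every finite size, with `g` applied
via the continuous functional calculus. -/
def OpAntitone (g : ℝ → ℝ) : Prop :=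
  ContinuousOn g (Set.Ioi 0) ∧ (∀ x : ℝ, 0 < x → 0 ≤ g x) ∧
    ∀ (k : Type) [Fintype k] [DecidableEq k] (X Y : Matrix k k ℂ),
      X.PosDef → Y.PosDef → LoewnerLE X Y → LoewnerLE (cfc g Y) (cfc g X)

open scoped MatrixOrder


namespace Gruss

lemma exists_poly (f : ℝ → ℝ) (S : Set ℝ) (hS : S.Finite) :
    ∃ p : Polynomial ℝ, ∀ x ∈ S, p.eval x = f x := by
  classical
  refine ⟨Lagrange.interpolate hS.toFinset id f, fun x hx => ?_⟩
  exact Lagrange.eval_interpolate_at_node (v := id) f (Set.injOn_id _) (hS.mem_toFinset.2 hx)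

lemma cfc_poly {n : Type} [Fintype n] [DecidableEq n] (f : ℝ → ℝ) (p : Polynomial ℝ)
    (X : Matrix n n ℂ) (hX : X.IsHermitian) (h : ∀ x ∈ spectrum ℝ X, p.eval x = f x) :
    cfc f X = Polynomial.aeval X p := by
  have hX' : IsSelfAdjoint X := hX
  rw [← cfc_polynomial p X]
  exact cfc_congr fun x hx => (h x hx).symm

/-- block diagonal embedding -/
noncomputable def bd (n : Type) [Fintype n] [DecidableEq n] :
    (Matrix n n ℂ × Matrix n n ℂ) →ₐ[ℝ] Matrix (n ⊕ n) (n ⊕ n) ℂ where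
  toFun P := fromBlocks P.1 0 0 P.2
  map_one' := by simp
  map_mul' := by intro x y; simp [fromBlocks_multiply]
  map_zero' := by simp
  map_add' := by intro x y; simp [fromBlocks_add]
  commutes' := by
    intro r
    simp only [Algebra.algebraMap_eq_smul_one, Prod.smul_fst, Prod.smul_snd, Prod.fst_one, Prod.snd_one]
    rw [← fromBlocks_one, fromBlocks_smul]; simp

/-- conjugation -/
noncomputable def cj {k : Type} [Fintype k] [DecidableEq k] (W : Matrix k k ℂ)
    (h1 : W * Wᴴ = 1) (h2 : Wᴴ * W = 1) : Matrix k k ℂ →ₐ[ℝ] Matrix k k ℂ where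
  toFun P := W * P * Wᴴ
  map_one' := by simp [h1]
  map_mul' := by
    intro x y
    calc W * (x * y) * Wᴴ = W * x * 1 * y * Wᴴ := by simp [mul_assoc]
      _ = _ := by rw [← h2]; simp only [mul_assoc]
  map_zero' := by simp
  map_add' := by intro x y; simp [mul_add, add_mul]
  commutes' := by
    intro r
    simp [Algebra.algebraMap_eq_smul_one, h1]

lemma cfc_bd {n : Type} [Fintype n] [DecidableEq n] (f : ℝ → ℝ) (A B : Matrix n n ℂ)
    (hA : A.IsHermitian) (hB : B.IsHermitian) :
    cfc f (fromBlocks A 0 0 B) = fromBlocks (cfc f A) 0 0 (cfc f B) := by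
  obtain ⟨p, hp⟩ := exists_poly f (spectrum ℝ A ∪ spectrum ℝ B ∪ spectrum ℝ (fromBlocks A 0 0 B))
    ((A.finite_real_spectrum.union B.finite_real_spectrum).union Matrix.finite_real_spectrum)
  rw [cfc_poly f p A hA fun x hx => hp x (by simp [hx]), cfc_poly f p B hB fun x hx => hp x (by simp [hx]),
    cfc_poly f p _ (hA.fromBlocks (by simp) hB) fun x hx => hp x (by simp [hx])]
  have := Polynomial.aeval_algHom_apply (bd n) (A, B) p
  have h2 := Polynomial.aeval_algHom_apply (AlgHom.fst ℝ (Matrix n n ℂ) (Matrix n n ℂ)) (A, B) p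
  have h3 := Polynomial.aeval_algHom_apply (AlgHom.snd ℝ (Matrix n n ℂ) (Matrix n n ℂ)) (A, B) p
  simp only [AlgHom.fst_apply, AlgHom.snd_apply] at h2 h3
  rw [h2, h3]
  exact this

lemma cfc_cj {n : Type} [Fintype n] [DecidableEq n] (f : ℝ → ℝ) (A W : Matrix n n ℂ)
    (h1 : W * Wᴴ = 1) (h2 : Wᴴ * W = 1)
    (hA : A.IsHermitian) :
    cfc f (W * A * Wᴴ) = W * cfc f A * Wᴴ := by
  obtain ⟨p, hp⟩ := exists_poly f (spectrum ℝ A ∪ spectrum ℝ (W * A * Wᴴ))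
    (A.finite_real_spectrum.union Matrix.finite_real_spectrum)
  rw [cfc_poly f p A hA fun x hx => hp x (by simp [hx]),
    cfc_poly f p _ (isHermitian_mul_mul_conjTranspose W hA) fun x hx => hp x (by simp [hx])]
  exact Polynomial.aeval_algHom_apply (cj W h1 h2) A p

lemma exists_bound {n : Type} [Fintype n] [DecidableEq n] (A : Matrix n n ℂ)
    (hA : A.IsHermitian) : ∃ l : ℝ, A ≤ l • (1 : Matrix n n ℂ) := by
  obtain ⟨l, hl⟩ := A.finite_real_spectrum.bddAbove
  have hA' : IsSelfAdjoint A := hA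
  refine ⟨l, ?_⟩
  rw [← Algebra.algebraMap_eq_smul_one]
  exact (le_algebraMap_iff_spectrum_le).2 fun x hx => hl hx

lemma sq_exists {n : Type} [Fintype n] [DecidableEq n] (A : Matrix n n ℂ)
    (hA : A.PosSemidef) : ∃ S : Matrix n n ℂ, A = Sᴴ * S :=
  CStarAlgebra.nonneg_iff_eq_star_mul_self.1 (nonneg_iff_posSemidef.2 hA)

lemma concave {n : Type} [Fintype n] [DecidableEq n] (f : ℝ → ℝ) (hf : OpMonotone f)
    (A B : Matrix n n ℂ) (hA : A.PosSemidef) (hB : B.PosSemidef) (c s e : ℝ) (he : 0 < e)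
    (hcs : c * c + s * s = 1) :
    (c * c) • cfc f A + (s * s) • cfc f B ≤
      cfc f ((c * c) • A + (s * s) • B + e • (1 : Matrix n n ℂ)) := by
  set W : Matrix (n ⊕ n) (n ⊕ n) ℂ := fromBlocks (c • 1) (s • 1) ((-s) • 1) (c • 1) with hW
  have hWH : Wᴴ = fromBlocks (c • 1) ((-s) • 1) (s • 1) (c • 1) := by
    simp [hW, fromBlocks_conjTranspose]
  have h1 : W * Wᴴ = 1 := by
    rw [hWH, hW, fromBlocks_multiply, ← fromBlocks_one]
    congr 1 <;> simp [smul_smul, ← add_smul, hcs, mul_comm s c, add_comm (s*s)]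
  have h2 : Wᴴ * W = 1 := mul_eq_one_comm.1 h1
  have hconj : ∀ X Y : Matrix n n ℂ, W * fromBlocks X 0 0 Y * Wᴴ =
      fromBlocks ((c * c) • X + (s * s) • Y) ((c * s) • (Y - X)) ((c * s) • (Y - X))
        ((s * s) • X + (c * c) • Y) := by
    intro X Y
    rw [hWH, hW, fromBlocks_multiply, fromBlocks_multiply]
    congr 1 <;> simp [smul_smul] <;> module
  set C := (c * c) • A + (s * s) • B + e • (1 : Matrix n n ℂ) with hC
  set D := (c * s) • (B - A) with hD
  set E := (s * s) • A + (c * c) • B with hE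
  have hDh : D.IsHermitian := by
    have := hB.1.sub hA.1
    unfold IsHermitian at *
    rw [hD, conjTranspose_smul, this]; simp
  have hEh : E.IsHermitian := 
    ((hA.smul (mul_self_nonneg s)).add (hB.smul (mul_self_nonneg c))).1
  have hCh : C.IsHermitian := 
    (((hA.smul (mul_self_nonneg c)).add (hB.smul (mul_self_nonneg s))).add (PosSemidef.one.smul he.le)).1
  have heP : (e • (1 : Matrix n n ℂ)).PosDef := PosDef.one.smul he
  obtain ⟨l, hl⟩ := exists_bound (E + Dᴴ * (e • (1 : Matrix n n ℂ))⁻¹ * D) 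
    (hEh.add (isHermitian_conjTranspose_mul_mul D heP.1.inv))
  have key : LoewnerLE (W * fromBlocks A 0 0 B * Wᴴ) (fromBlocks C 0 0 (l • 1)) := by
    unfold LoewnerLE
    rw [hconj, sub_eq_add_neg, fromBlocks_neg, fromBlocks_add]
    let _ : Invertible (e • (1 : Matrix n n ℂ)) := heP.isUnit.invertible
    have h0 : (l • 1 - E - (-D)ᴴ * (e • (1 : Matrix n n ℂ))⁻¹ * (-D)).PosSemidef := by
      have h : (l • 1 - (E + Dᴴ * (e • (1 : Matrix n n ℂ))⁻¹ * D)).PosSemidef := hl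
      have e1 : l • 1 - E - (-D)ᴴ * (e • (1 : Matrix n n ℂ))⁻¹ * (-D) =
        l • 1 - (E + Dᴴ * (e • (1 : Matrix n n ℂ))⁻¹ * D) := by
        rw [conjTranspose_neg, neg_mul, neg_mul_neg, sub_sub]
      rw [e1]; exact h
    have := (PosDef.fromBlocks₁₁ (-D) (l • 1 - E) heP).2 h0
    have e1 : C + -((c * c) • A + (s * s) • B) = e • 1 := by rw [hC]; abel
    have e2 : 0 + -D = -D := zero_add _
    have e3 : l • 1 + -E = l • 1 - E := (sub_eq_add_neg _ _).symm
    rw [conjTranspose_neg, hDh.eq] at this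
    rw [e1, e2, e3]
    exact this
  have hT : (fromBlocks A 0 0 B).PosSemidef := by
    obtain ⟨S, hS⟩ := sq_exists A hA
    obtain ⟨R, hR⟩ := sq_exists B hB
    have := posSemidef_conjTranspose_mul_self (fromBlocks S 0 0 R)
    rw [fromBlocks_conjTranspose, fromBlocks_multiply] at this
    simpa [← hS, ← hR] using this
  have := hf.2.2 _ _ _ (hT.mul_mul_conjTranspose_same W) key
  rw [cfc_cj f _ W h1 h2 hT.1, cfc_bd f A B hA.1 hB.1, hconj, cfc_bd f _ _ hCh 
    (by rw [IsHermitian, conjTranspose_smul]; simp)] at this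
  unfold LoewnerLE at this
  have := this.submatrix Sum.inl
  exact this

lemma concave' {n : Type} [Fintype n] [DecidableEq n] (f : ℝ → ℝ) (hf : OpMonotone f)
    (A B : Matrix n n ℂ) (hA : A.PosSemidef) (hB : B.PosSemidef) (a b e : ℝ) (he : 0 < e)
    (ha : 0 ≤ a) (hb : 0 ≤ b) (hab : a + b = 1) :
    a • cfc f A + b • cfc f B ≤ cfc f (a • A + b • B + e • (1 : Matrix n n ℂ)) := by
  have := concave f hf A B hA hB (√a) (√b) e he
  rw [Real.mul_self_sqrt ha, Real.mul_self_sqrt hb] at this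
  exact this hab

lemma cfc_pq {n : Type} [Fintype n] [DecidableEq n] (A : Matrix n n ℂ) (hA : A.PosDef) (p q : ℝ) :
    cfc (fun x : ℝ => p * x + q * x⁻¹) A = p • A + q • A⁻¹ := by
  have hs : IsSelfAdjoint A := hA.1
  have hc : ∀ g : ℝ → ℝ, ContinuousOn g (spectrum ℝ A) := fun g => A.finite_real_spectrum.continuousOn g
  obtain ⟨u, rfl⟩ := hA.isUnit
  rw [cfc_add _ _ _ (hc _) (hc _), cfc_const_mul _ _ _ (hc _), cfc_const_mul _ _ _ (hc _),
    cfc_id' ℝ (u : Matrix n n ℂ), cfc_inv_id u, Matrix.coe_units_inv]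

lemma posDef_of {n : Type} [Fintype n] [DecidableEq n] (A : Matrix n n ℂ) (a : ℝ) (ha : 0 < a)
    (h : a • (1 : Matrix n n ℂ) ≤ A) : A.PosDef := by
  have h1 : (A - a • (1 : Matrix n n ℂ)).PosSemidef := h
  have := (PosDef.one.smul ha : (a • (1 : Matrix n n ℂ)).PosDef).add_posSemidef h1
  simpa using this

lemma pq_le {n : Type} [Fintype n] [DecidableEq n] (A : Matrix n n ℂ) (a b p q t : ℝ) (ha : 0 < a)
    (h : a • (1 : Matrix n n ℂ) ≤ A) (h' : A ≤ b • (1 : Matrix n n ℂ))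
    (H : ∀ x, a ≤ x → x ≤ b → p * x + q * x⁻¹ ≤ t) : p • A + q • A⁻¹ ≤ t • (1 : Matrix n n ℂ) := by
  have hA := posDef_of A a ha h
  have hs : IsSelfAdjoint A := hA.1
  have hc : ∀ g : ℝ → ℝ, ContinuousOn g (spectrum ℝ A) := fun g => A.finite_real_spectrum.continuousOn g
  rw [← Algebra.algebraMap_eq_smul_one] at h h' ⊢
  rw [← cfc_pq A hA]
  refine cfc_le_algebraMap _ _ _ (fun x hx => H x ?_ ?_) (hc _)
  · exact (algebraMap_le_iff_le_spectrum).1 h x hx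
  · exact (le_algebraMap_iff_spectrum_le).1 h' x hx

lemma le_pq {n : Type} [Fintype n] [DecidableEq n] (A : Matrix n n ℂ) (a b p q t : ℝ) (ha : 0 < a)
    (h : a • (1 : Matrix n n ℂ) ≤ A) (h' : A ≤ b • (1 : Matrix n n ℂ))
    (H : ∀ x, a ≤ x → x ≤ b → t ≤ p * x + q * x⁻¹) : t • (1 : Matrix n n ℂ) ≤ p • A + q • A⁻¹ := by
  have := pq_le A a b (-p) (-q) (-t) ha h h' (fun x h1 h2 => by linarith [H x h1 h2])
  have h2 := neg_le_neg this
  convert h2 using 1 <;> module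

lemma smul_mono {n : Type} [Fintype n] [DecidableEq n] {A B : Matrix n n ℂ} {r : ℝ} (hr : 0 ≤ r)
    (h : A ≤ B) : r • A ≤ r • B := by
  have h1 : (B - A).PosSemidef := h
  have := h1.smul hr
  rw [smul_sub] at this
  exact this

lemma inv_bounds {n : Type} [Fintype n] [DecidableEq n] (A : Matrix n n ℂ) (a b : ℝ) (ha : 0 < a)
    (h : a • (1 : Matrix n n ℂ) ≤ A) (h' : A ≤ b • (1 : Matrix n n ℂ)) :
    b⁻¹ • (1 : Matrix n n ℂ) ≤ A⁻¹ ∧ A⁻¹ ≤ a⁻¹ • (1 : Matrix n n ℂ) ∧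
    A + (a * b) • A⁻¹ ≤ (a + b) • (1 : Matrix n n ℂ) := by
  refine ⟨?_, ?_, ?_⟩
  · have := le_pq A a b 0 1 b⁻¹ ha h h' (fun x h1 h2 => by
      have : b⁻¹ ≤ x⁻¹ := inv_anti₀ (by linarith) h2
      linarith)
    simpa using this
  · have := pq_le A a b 0 1 a⁻¹ ha h h' (fun x h1 h2 => by
      have : x⁻¹ ≤ a⁻¹ := inv_anti₀ (by linarith) h1
      linarith)
    simpa using this
  · have := pq_le A a b 1 (a * b) (a + b) ha h h' (fun x h1 h2 => by
      have hx : 0 < x := by linarith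
      rw [← div_eq_mul_inv, ← le_sub_iff_add_le', div_le_iff₀ hx]
      nlinarith)
    simpa using this

lemma scale {n : Type} [Fintype n] [DecidableEq n] (f : ℝ → ℝ) (hf : OpMonotone f)
    (X Y : Matrix n n ℂ) (hY : Y.PosSemidef) (L e : ℝ) (he : 0 < e) (hL : 1 ≤ L)
    (h : Y + (L * e) • (1 : Matrix n n ℂ) ≤ L • X) : cfc f Y ≤ L • cfc f X := by
  have hL0 : 0 < L := by linarith
  have hi : L⁻¹ ≤ 1 := inv_le_one_of_one_le₀ hL
  have h1 := concave' f hf Y 0 hY PosSemidef.zero L⁻¹ (1 - L⁻¹) e he (by positivity) (by linarith)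
    (by ring)
  have h0 : (0 : Matrix n n ℂ) ≤ cfc f (0 : Matrix n n ℂ) := by
    have := cfc_algebraMap (A := Matrix n n ℂ) (0 : ℝ) f
    rw [map_zero] at this
    rw [this, Algebra.algebraMap_eq_smul_one, nonneg_iff_posSemidef]
    exact PosSemidef.one.smul (hf.2.1 0 le_rfl)
  have h2 : L⁻¹ • Y + (1 - L⁻¹) • (0 : Matrix n n ℂ) + e • (1 : Matrix n n ℂ) ≤ X := by
    have := smul_mono (inv_nonneg.2 hL0.le) h
    rw [smul_add, smul_smul, smul_smul, inv_mul_cancel_left₀ hL0.ne', inv_mul_cancel₀ hL0.ne', one_smul] at this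
    simpa using this
  have h3 : cfc f (L⁻¹ • Y + (1 - L⁻¹) • (0 : Matrix n n ℂ) + e • (1 : Matrix n n ℂ)) ≤ cfc f X :=
    hf.2.2 _ _ _ (((hY.smul (inv_nonneg.2 hL0.le)).add (PosSemidef.zero.smul (by linarith))).add
      (PosSemidef.one.smul he.le)) h2
  have h4 : L⁻¹ • cfc f Y ≤ cfc f X := by
    refine le_trans ?_ (h1.trans h3)
    have := smul_mono (show 0 ≤ 1 - L⁻¹ by linarith) h0
    rw [smul_zero] at this
    exact le_add_of_nonneg_right this
  have := smul_mono hL0.le h4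
  rwa [smul_smul, mul_inv_cancel₀ hL0.ne', one_smul] at this

lemma main {n : Type} [Fintype n] [DecidableEq n] (f : ℝ → ℝ) (hf : OpMonotone f)
    (A B : Matrix n n ℂ) (m M : ℝ) (hm : 0 < m) (hmM : m < M)
    (hA1 : m • (1 : Matrix n n ℂ) ≤ A) (hA2 : A ≤ M • (1 : Matrix n n ℂ))
    (hB1 : m • (1 : Matrix n n ℂ) ≤ B) (hB2 : B ≤ M • (1 : Matrix n n ℂ)) :
    (2 : ℝ)⁻¹ • (cfc f A + cfc f B) - cfc f (hmean A B) ≤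
      (((M - m) ^ 2 / (4 * M * m)) * f M) • (1 : Matrix n n ℂ) := by
  have hM : 0 < M := hm.trans hmM
  obtain ⟨a1, a2, a3⟩ := inv_bounds A m M hm hA1 hA2
  obtain ⟨b1, b2, b3⟩ := inv_bounds B m M hm hB1 hB2
  have h2 : (0 : ℝ) ≤ 2⁻¹ := by norm_num
  set H := (2 : ℝ)⁻¹ • (A⁻¹ + B⁻¹) with hH
  have H1 : M⁻¹ • (1 : Matrix n n ℂ) ≤ H := by
    convert smul_mono h2 (add_le_add a1 b1) using 1
    module
  have H2 : H ≤ m⁻¹ • (1 : Matrix n n ℂ) := by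
    convert smul_mono h2 (add_le_add a2 b2) using 1
    module
  obtain ⟨x1, x2, -⟩ := inv_bounds H M⁻¹ m⁻¹ (by positivity) H1 H2
  rw [inv_inv] at x1 x2
  have hX : hmean A B = H⁻¹ := rfl
  rw [hX]
  set X := H⁻¹
  set K := (M + m) ^ 2 / (4 * M * m) with hK
  have hK1 : (M - m) ^ 2 / (4 * M * m) = K - 1 := by rw [hK]; field_simp; ring
  have hK0 : 0 ≤ K - 1 := by rw [← hK1]; positivity
  have kant0 : (m + M) • (1 : Matrix n n ℂ) ≤ (m * M) • H + K • X := by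
    refine le_pq H M⁻¹ m⁻¹ (m * M) K (m + M) (by positivity) H1 H2 fun x h1 _ => ?_
    have hx : 0 < x := lt_of_lt_of_le (by positivity) h1
    have : m * M * x + K * x⁻¹ - (m + M) = (2 * m * M * x - (m + M)) ^ 2 / (4 * M * m * x) := by
      rw [hK]; field_simp; ring
    have : 0 ≤ m * M * x + K * x⁻¹ - (m + M) := by rw [this]; positivity
    linarith
  have kant : (2 : ℝ)⁻¹ • (A + B) ≤ K • X := by
    have h3 := smul_mono h2 (add_le_add a3 b3)
    have h4 := add_le_add h3 kant0
    have h5 : (2 : ℝ)⁻¹ • (A + B) + ((m * M) • H + (m + M) • (1 : Matrix n n ℂ)) ≤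
        K • X + ((m * M) • H + (m + M) • (1 : Matrix n n ℂ)) := by
      convert h4 using 1
      · rw [hH]; module
      · module
    exact le_of_add_le_add_right h5
  have hAp := (posDef_of A m hm hA1).posSemidef
  have hBp := (posDef_of B m hm hB1).posSemidef
  have hXp := (posDef_of X m hm x1).posSemidef
  have hfX : cfc f X ≤ f M • (1 : Matrix n n ℂ) := by
    have := hf.2.2 _ X (M • 1) hXp x2
    rw [← Algebra.algebraMap_eq_smul_one, cfc_algebraMap, Algebra.algebraMap_eq_smul_one] at this
    exact this
  have hfM := hf.2.1 M hM.le
  have step : ∀ d : ℝ, 0 < d → (2 : ℝ)⁻¹ • (cfc f A + cfc f B) - cfc f X ≤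
      ((K - 1 + d) * f M) • (1 : Matrix n n ℂ) := by
    intro d hd
    have hL : 1 ≤ K + d := by linarith
    set e := d * m / (1 + (K + d)) with he
    have he0 : 0 < e := by rw [he]; apply div_pos (by positivity); linarith
    have he1 : e + (K + d) * e = d * m := by
      rw [he]; have : 1 + (K + d) ≠ 0 := by linarith
      field_simp
    have c1 := concave' f hf A B hAp hBp 2⁻¹ 2⁻¹ e he0 h2 h2 (by norm_num)
    have hY : ((2 : ℝ)⁻¹ • A + (2 : ℝ)⁻¹ • B + e • (1 : Matrix n n ℂ)).PosSemidef :=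
      ((hAp.smul h2).add (hBp.smul h2)).add (PosSemidef.one.smul he0.le)
    have c2 := scale f hf X _ hY (K + d) e he0 hL (by
      have h6 := add_le_add kant (smul_mono hd.le x1)
      rw [smul_smul, ← he1] at h6
      convert h6 using 1 <;> module)
    have c3 := smul_mono (show 0 ≤ K - 1 + d by linarith) hfX
    have c4 := c1.trans c2
    rw [smul_smul] at c3
    refine le_trans ?_ c3
    rw [sub_le_iff_le_add]
    convert c4 using 1 <;> module
  rw [hK1]
  have hs : IsSelfAdjoint ((2 : ℝ)⁻¹ • (cfc f A + cfc f B) - cfc f X) := by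
    refine IsSelfAdjoint.sub (IsSelfAdjoint.smul (by simp [IsSelfAdjoint]) ?_) (cfc_predicate f X)
    exact (cfc_predicate f A).add (cfc_predicate f B)
  rw [← Algebra.algebraMap_eq_smul_one, le_algebraMap_iff_spectrum_le hs]
  intro x hx
  have step' : ∀ d : ℝ, 0 < d → x ≤ (K - 1) * f M + d * f M := by
    intro d hd
    have := step d hd
    rw [← Algebra.algebraMap_eq_smul_one, le_algebraMap_iff_spectrum_le hs] at this
    linarith [this x hx]
  refine le_of_forall_pos_le_add fun ε hε => ?_
  have := step' (ε / (f M + 1)) (by positivity)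
  have h7 : ε / (f M + 1) * f M ≤ ε := by
    rw [div_mul_eq_mul_div, div_le_iff₀ (by positivity)]
    nlinarith
  linarith

end Gruss

theorem gruss_monotone {ι κ : Type} [Fintype ι] [DecidableEq ι] [Fintype κ] [DecidableEq κ]
    (Φ : Matrix ι ι ℂ →ₗ[ℂ] Matrix κ κ ℂ)
    (hΦ : ∀ X : Matrix ι ι ℂ, X.PosSemidef → (Φ X).PosSemidef) (hΦ1 : Φ 1 = 1)
    (f : ℝ → ℝ) (hf : OpMonotone f)
    (A B : Matrix ι ι ℂ) (m M : ℝ) (hm : 0 < m) (hmM : m < M)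
    (hA1 : LoewnerLE (m • (1 : Matrix ι ι ℂ)) A) (hA2 : LoewnerLE A (M • (1 : Matrix ι ι ℂ)))
    (hB1 : LoewnerLE (m • (1 : Matrix ι ι ℂ)) B) (hB2 : LoewnerLE B (M • (1 : Matrix ι ι ℂ))) :
    LoewnerLE ((2 : ℝ)⁻¹ • (Φ (cfc f A) + Φ (cfc f B)) - Φ (cfc f (hmean A B)))
      ((((M - m) ^ 2 / (4 * M * m)) * f M) • (1 : Matrix κ κ ℂ)) := by
  have h := Gruss.main f hf A B m M hm hmM hA1 hA2 hB1 hB2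
  have h1 := hΦ _ h
  unfold LoewnerLE
  convert h1 using 1
  simp only [map_sub, map_add, LinearMap.map_smul_of_tower, hΦ1]
end

section
/- Let Φ be a unital positive linear map from n×n to m×m complex matrices, let g : ℝ → ℝ be operator monotone decreasing on (0,∞), and let A, B be n×n complex matrices with m·I ≤ A ≤ M·I and m·I ≤ B ≤ M·I for some scalars 0 < m < M. Then Φ(g(A ! B)) − (Φ(g(A)) + Φ(g(B)))/2 ≤ ((M−m)²/(4Mm))·g(m)·I. -/
open Matrix ComplexOrder

section helpers
open Polynomial

theorem exists_interp (g : ℝ → ℝ) (s : Set ℝ) (hs : s.Finite) :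
    ∃ p : ℝ[X], ∀ x ∈ s, p.eval x = g x := by
  refine ⟨Lagrange.interpolate hs.toFinset id g, fun x hx => ?_⟩
  exact Lagrange.eval_interpolate_at_node g (v := id) (Set.injOn_id _) (hs.mem_toFinset.2 hx)

theorem cfc_eq_aeval {k : Type} [Fintype k] [DecidableEq k] {X : Matrix k k ℂ}
    (hX : X.IsHermitian) (g : ℝ → ℝ) (p : ℝ[X])
    (h : ∀ x ∈ spectrum ℝ X, p.eval x = g x) : cfc g X = aeval X p := by
  rw [← cfc_polynomial p X hX.isSelfAdjoint]
  exact cfc_congr fun x hx => (h x hx).symm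

theorem spec_finite {k : Type} [Fintype k] [DecidableEq k] (X : Matrix k k ℂ) :
    (spectrum ℝ X).Finite := Matrix.finite_real_spectrum

theorem aeval_diagBlocks {k : Type} [Fintype k] [DecidableEq k] (A B : Matrix k k ℂ) (p : ℝ[X]) :
    aeval (fromBlocks A 0 0 B) p = fromBlocks (aeval A p) 0 0 (aeval B p) := by
  induction p using Polynomial.induction_on' with
  | add p q hp hq => simp [hp, hq, fromBlocks_add]
  | monomial n a =>
    have : ∀ n : ℕ, (fromBlocks A 0 0 B) ^ n = fromBlocks (A ^ n) 0 0 (B ^ n) := by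
      intro n
      induction n with
      | zero => simp [fromBlocks_one]
      | succ n ih => simp [pow_succ, ih, fromBlocks_multiply]
    simp only [aeval_monomial, this, ← Algebra.smul_def, fromBlocks_smul, smul_zero]

theorem aeval_rotBlocks {k : Type} [Fintype k] [DecidableEq k] (A B : Matrix k k ℂ) (p : ℝ[X]) :
    aeval (fromBlocks ((2:ℝ)⁻¹ • (A + B)) ((2:ℝ)⁻¹ • (A - B)) ((2:ℝ)⁻¹ • (A - B))
        ((2:ℝ)⁻¹ • (A + B))) p =
      fromBlocks ((2:ℝ)⁻¹ • (aeval A p + aeval B p)) ((2:ℝ)⁻¹ • (aeval A p - aeval B p))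
        ((2:ℝ)⁻¹ • (aeval A p - aeval B p)) ((2:ℝ)⁻¹ • (aeval A p + aeval B p)) := by
  induction p using Polynomial.induction_on' with
  | add p q hp hq =>
    simp only [map_add, hp, hq, fromBlocks_add]
    congr 1 <;> module
  | monomial n a =>
    have : ∀ n : ℕ, (fromBlocks ((2:ℝ)⁻¹ • (A + B)) ((2:ℝ)⁻¹ • (A - B)) ((2:ℝ)⁻¹ • (A - B))
        ((2:ℝ)⁻¹ • (A + B))) ^ n = fromBlocks ((2:ℝ)⁻¹ • (A ^ n + B ^ n))
        ((2:ℝ)⁻¹ • (A ^ n - B ^ n)) ((2:ℝ)⁻¹ • (A ^ n - B ^ n)) ((2:ℝ)⁻¹ • (A ^ n + B ^ n)) := by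
      intro n
      induction n with
      | zero =>
        rw [pow_zero, pow_zero, pow_zero, ← fromBlocks_one]
        congr 1 <;> module
      | succ n ih =>
        rw [pow_succ, ih, fromBlocks_multiply]
        simp only [pow_succ, smul_mul_assoc, mul_smul_comm, mul_add, add_mul, mul_sub, sub_mul]
        congr 1 <;> module
    simp only [aeval_monomial, this, ← Algebra.smul_def, fromBlocks_smul]
    congr 1 <;> module

theorem aeval_proj {k : Type} [Fintype k] [DecidableEq k] (P : Matrix k k ℂ) (hP : P * P = P)
    (a b : ℝ) (p : ℝ[X]) :
    aeval (a • P + b • (1 - P)) p = p.eval a • P + p.eval b • (1 - P) := by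
  induction p using Polynomial.induction_on' with
  | add p q hp hq =>
    simp only [map_add, hp, hq, eval_add]
    module
  | monomial n c =>
    have : ∀ n : ℕ, (a • P + b • (1 - P)) ^ n = a ^ n • P + b ^ n • (1 - P) := by
      intro n
      induction n with
      | zero => rw [pow_zero]; module
      | succ n ih =>
        rw [pow_succ, ih]
        simp only [smul_mul_assoc, mul_smul_comm, mul_add, add_mul, mul_sub, sub_mul, hP,
          mul_one, one_mul]
        module
    simp only [aeval_monomial, this, ← Algebra.smul_def, eval_monomial]
    module

theorem cfc_proj {k : Type} [Fintype k] [DecidableEq k] (P : Matrix k k ℂ) (hP : P * P = P)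
    (hPh : P.IsHermitian) (a b : ℝ) (g : ℝ → ℝ) :
    cfc g (a • P + b • (1 - P)) = g a • P + g b • (1 - P) := by
  obtain ⟨p, hp⟩ := exists_interp g (spectrum ℝ (a • P + b • (1 - P)) ∪ {a, b})
    ((spec_finite _).union (by simp))
  have hH : (a • P + b • (1 - P)).IsHermitian := by
    simp [Matrix.IsHermitian, conjTranspose_smul, hPh.eq]
  rw [cfc_eq_aeval hH g p (fun x hx => hp x (Or.inl hx)), aeval_proj P hP,
    hp a (by simp), hp b (by simp)]

theorem posSemidef_two (p q r : ℝ) (hp : 0 < p) (h : r * r ≤ p * q) :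
    (!![(p:ℂ), r; r, q]).PosSemidef := by
  have h1 : (0:ℝ) ≤ q - r * r / p := by
    rw [sub_nonneg, div_le_iff₀ hp]; linarith
  have e : (!![(p:ℂ), r; r, q]) = (p⁻¹ : ℝ) • vecMulVec ![(p:ℂ), r] (star ![(p:ℂ), r])
      + diagonal ![0, ((q - r * r / p : ℝ) : ℂ)] := by
    have hpc : (p:ℂ) ≠ 0 := by exact_mod_cast hp.ne'
    ext i j
    fin_cases i <;> fin_cases j <;> simp [vecMulVec] <;> field_simp <;> ring
  rw [e]
  refine ((posSemidef_vecMulVec_self_star _).smul (inv_nonneg.2 hp.le)).add ?_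
  refine PosSemidef.diagonal fun i => ?_
  fin_cases i
  · simp
  · simp only [Fin.mk_one, Pi.zero_apply, Matrix.cons_val_one, Matrix.cons_val_fin_one]
    exact_mod_cast h1

theorem scalar_aux {g : ℝ → ℝ} (hg : OpAntitone g) {a b t : ℝ} (ha : 0 < a) (hab : a ≤ b)
    (ht0 : 0 ≤ t) (ht : t < a / b) : t * g a ≤ g b := by
  have hb : 0 < b := ha.trans_le hab
  have htb : t * b < a := (lt_div_iff₀ hb).1 ht
  have ht1 : t < 1 := ht.trans_le ((div_le_one hb).2 hab)
  obtain ⟨L, hL1, hL2, hL0⟩ : ∃ L : ℝ, 0 < L * (a - t * b) - b * a * (1 - t) ∧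
      0 < t * a + (1 - t) * L - b ∧ 0 < L := by
    have h1 : 0 < a - t * b := by linarith
    have h2 : 0 < 1 - t := by linarith
    have e1 : b * a * (1 - t) / (a - t * b) * (a - t * b) = b * a * (1 - t) := div_mul_cancel₀ _ h1.ne'
    have e2 : b / (1 - t) * (1 - t) = b := div_mul_cancel₀ _ h2.ne'
    have p1 : 0 < b * a * (1 - t) / (a - t * b) := by positivity
    have p2 : 0 < b / (1 - t) := by positivity
    refine ⟨b * a * (1 - t) / (a - t * b) + b / (1 - t) + 1, ?_, ?_, by positivity⟩
    · nlinarith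
    · nlinarith
  set p := t * a + (1 - t) * L - b with hp
  set sl := L * (a - t * b) - b * a * (1 - t) with hsl
  have hδ : 0 < sl / p := div_pos hL1 hL2
  set c := √t
  set s := √(1 - t)
  have hcc : c * c = t := Real.mul_self_sqrt ht0
  have hss : s * s = 1 - t := Real.mul_self_sqrt (by linarith)
  let P : Matrix (Fin 2) (Fin 2) ℂ := !![((t:ℝ):ℂ), ((c * s : ℝ):ℂ); ((c * s:ℝ):ℂ), ((1 - t:ℝ):ℂ)]
  let Q : Matrix (Fin 2) (Fin 2) ℂ := !![1, 0; 0, 0]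
  have hccC : (c:ℂ) * c = t := by exact_mod_cast hcc
  have hssC : (s:ℂ) * s = 1 - t := by exact_mod_cast hss
  have hP : P * P = P := by
    ext i j
    fin_cases i <;> fin_cases j <;> simp [P, Matrix.mul_apply, Fin.sum_univ_two] 
    · linear_combination (s:ℂ) * s * hccC + (t:ℂ) * hssC
    · ring
    · ring
    · linear_combination (s:ℂ) * s * hccC + (t:ℂ) * hssC
  have hPh : P.IsHermitian := by
    ext i j
    fin_cases i <;> fin_cases j <;> simp [P]
  have hQ : Q * Q = Q := by
    ext i j
    fin_cases i <;> fin_cases j <;> simp [Q, Matrix.mul_apply, Fin.sum_univ_two]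
  have hQh : Q.IsHermitian := by
    ext i j
    fin_cases i <;> fin_cases j <;> simp [Q]
  have hDpd : (b • Q + (sl / p) • (1 - Q)).PosDef := by
    have : b • Q + (sl / p) • (1 - Q) = diagonal ![(b:ℂ), ((sl / p : ℝ):ℂ)] := by
      ext i j
      fin_cases i <;> fin_cases j <;> simp [Q]
    rw [this]
    refine PosDef.diagonal fun i => ?_
    fin_cases i
    · simpa using hb
    · simp only [Fin.mk_one, Matrix.cons_val_one, Matrix.cons_val_fin_one]
      exact_mod_cast hδ
  have hle : LoewnerLE (b • Q + (sl / p) • (1 - Q)) (a • P + L • (1 - P)) := by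
    unfold LoewnerLE
    have := posSemidef_two p (a * (1 - t) + L * t - sl / p) (c * s * (a - L)) hL2 (by
      have : p * (sl / p) = sl := by field_simp
      have h3 : c * s * (a - L) * (c * s * (a - L)) = t * (1 - t) * (a - L) ^ 2 := by
        linear_combination (a - L) ^ 2 * (s * s * hcc + t * hss)
      rw [h3, mul_sub p, this, hp, hsl]
      apply le_of_eq; ring)
    convert this using 1
    ext i j
    fin_cases i <;> fin_cases j <;> simp [P, Q, hp] <;> ring
  have hTpd : (a • P + L • (1 - P)).PosDef := by
    have := hDpd.add_posSemidef hle
    simpa using this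
  have key := hg.2.2 (Fin 2) _ _ hDpd hTpd hle
  rw [cfc_proj P hP hPh, cfc_proj Q hQ hQh] at key
  have h00 := key.diag_nonneg (i := 0)
  simp [P, Q] at h00
  have h00' : (0:ℝ) ≤ g b - (g a * t + g L * (1 - t)) := by
    have h := h00
    norm_cast at h
    linarith
  have := hg.2.1 L hL0
  nlinarith

theorem scalar_main {g : ℝ → ℝ} (hg : OpAntitone g) {a b : ℝ} (ha : 0 < a) (hab : a ≤ b) :
    g a ≤ b / a * g b := by
  have hb : 0 < b := ha.trans_le hab
  have h : a / b * g a ≤ g b := by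
    have hc : Filter.Tendsto (fun t : ℝ => t * g a) (nhdsWithin (a/b) (Set.Iio (a/b)))
        (nhds (a / b * g a)) :=
      ((continuous_id.mul continuous_const).tendsto _).mono_left nhdsWithin_le_nhds
    refine le_of_tendsto hc ?_
    filter_upwards [Ioo_mem_nhdsLT (div_pos ha hb)] with t ht
    exact scalar_aux hg ha hab ht.1.le ht.2
  have : b / a * (a / b * g a) = g a := by field_simp
  rw [← this]
  exact mul_le_mul_of_nonneg_left h (by positivity)

end helpers

section helpers2

theorem posSemidef_of_eta {k : Type} [Fintype k] {P R : Matrix k k ℂ}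
    (hP : P.IsHermitian) (h : ∀ η : ℝ, 0 < η → (P + η • R).PosSemidef) : P.PosSemidef := by
  refine PosSemidef.of_dotProduct_mulVec_nonneg hP fun x => ?_
  have hc : Filter.Tendsto (fun η : ℝ => star x ⬝ᵥ P *ᵥ x + (η : ℂ) * (star x ⬝ᵥ R *ᵥ x))
      (nhdsWithin 0 (Set.Ioi 0)) (nhds (star x ⬝ᵥ P *ᵥ x)) := by
    have : Continuous (fun η : ℝ => star x ⬝ᵥ P *ᵥ x + (η : ℂ) * (star x ⬝ᵥ R *ᵥ x)) := by
      fun_prop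
    have h2 := this.tendsto 0
    simp only [Complex.ofReal_zero, zero_mul, add_zero] at h2
    exact h2.mono_left nhdsWithin_le_nhds
  refine ge_of_tendsto hc ?_
  filter_upwards [self_mem_nhdsWithin] with η hη
  have := (h η hη).dotProduct_mulVec_nonneg x
  have e : η • R = (η : ℂ) • R := by ext; simp
  rwa [e, add_mulVec, smul_mulVec, dotProduct_add, dotProduct_smul, smul_eq_mul] at this

theorem posDef_smul_one {k : Type} [Fintype k] [DecidableEq k] {m : ℝ} (hm : 0 < m) :
    (m • (1 : Matrix k k ℂ)).PosDef := PosDef.one.smul hm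

theorem posDef_of_ge {k : Type} [Fintype k] [DecidableEq k] {m : ℝ} (hm : 0 < m)
    {A : Matrix k k ℂ} (h : LoewnerLE (m • (1 : Matrix k k ℂ)) A) : A.PosDef := by
  have := (posDef_smul_one (k := k) hm).add_posSemidef h
  simpa using this

theorem rot_psd {k : Type} [Fintype k] [DecidableEq k] {A B : Matrix k k ℂ}
    (hA : A.PosSemidef) (hB : B.PosSemidef) :
    (fromBlocks ((2:ℝ)⁻¹ • (A + B)) ((2:ℝ)⁻¹ • (A - B)) ((2:ℝ)⁻¹ • (A - B))
        ((2:ℝ)⁻¹ • (A + B))).PosSemidef := by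
  have h1 := hA.conjTranspose_mul_mul_same (fromCols (1 : Matrix k k ℂ) (1 : Matrix k k ℂ))
  have h2 := hB.conjTranspose_mul_mul_same (fromCols (1 : Matrix k k ℂ) (-1 : Matrix k k ℂ))
  have h3 := (h1.add h2).smul (show (0:ℝ) ≤ 2⁻¹ by norm_num)
  convert h3 using 1
  simp only [conjTranspose_fromCols_eq_fromRows_conjTranspose, conjTranspose_one,
    conjTranspose_neg, fromRows_mul, 
    mul_fromCols, one_mul, mul_one, neg_mul, mul_neg, neg_neg]
  simp [sub_eq_add_neg, fromBlocks_add, fromBlocks_smul]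

theorem convex_aux {k : Type} [Fintype k] [DecidableEq k] {g : ℝ → ℝ} (hg : OpAntitone g)
    {A B : Matrix k k ℂ} {m η : ℝ} (hm : 0 < m) (hη : 0 < η)
    (hA : LoewnerLE (m • (1 : Matrix k k ℂ)) A) (hB : LoewnerLE (m • (1 : Matrix k k ℂ)) B) :
    LoewnerLE (cfc g ((1 + η) • ((2:ℝ)⁻¹ • (A + B)))) ((2:ℝ)⁻¹ • (cfc g A + cfc g B)) := by
  have hAp := posDef_of_ge hm hA
  have hBp := posDef_of_ge hm hB
  set N := (2:ℝ)⁻¹ • (A + B) with hN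
  set D := (2:ℝ)⁻¹ • (A - B) with hD
  have hNp : N.PosDef := (hAp.add hBp).smul (by norm_num : (0:ℝ) < 2⁻¹)
  have hDh : Dᴴ = D := by
    simp [hD, conjTranspose_smul, hAp.isHermitian.eq, hBp.isHermitian.eq]
  have hηN : (η • N).PosDef := hNp.smul hη
  set C := N + D * (η • N)⁻¹ * D with hC
  have hDD : (D * (η • N)⁻¹ * D).PosSemidef := by
    have := hηN.inv.posSemidef.conjTranspose_mul_mul_same D
    rwa [hDh] at this
  have hCp : C.PosDef := hNp.add_posSemidef hDD
  set T := fromBlocks N D D N with hT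
  have hTp : T.PosDef := by
    refine posDef_of_ge hm ?_
    have := rot_psd hA hB
    unfold LoewnerLE
    convert this using 1
    rw [← fromBlocks_one, fromBlocks_smul, hT, sub_eq_add_neg, fromBlocks_neg, fromBlocks_add]
    congr 1
    · rw [hN]; module
    · rw [hD]; module
    · rw [hD]; module
    · rw [hN]; module
  have hle : LoewnerLE T (fromBlocks ((1 + η) • N) 0 0 C) := by
    unfold LoewnerLE
    have : fromBlocks ((1 + η) • N) 0 0 C - T = fromBlocks (η • N) (-D) (-D)ᴴ (C - N) := by
      rw [hT, sub_eq_add_neg, fromBlocks_neg, fromBlocks_add, conjTranspose_neg, hDh]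
      congr 1
      · module
      · simp
      · simp
    haveI inv0 := hηN.isUnit.invertible
    rw [this, PosDef.fromBlocks₁₁ _ _ hηN, conjTranspose_neg, hDh, hC]
    have e0 : N + D * (η • N)⁻¹ * D - N - -D * (η • N)⁻¹ * -D = 0 := by
      rw [neg_mul, neg_mul_neg]; abel
    rw [e0]
    exact PosSemidef.zero
  have h1N : ((1 + η) • N).PosDef := hNp.smul (by linarith : (0:ℝ) < 1 + η)
  have hBlk : (fromBlocks ((1 + η) • N) 0 0 C).PosDef := by
    have := hTp.add_posSemidef hle
    simpa using this
  have key := hg.2.2 (k ⊕ k) _ _ hTp hBlk hle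
  obtain ⟨p, hp⟩ := exists_interp g
    (spectrum ℝ A ∪ spectrum ℝ B ∪ spectrum ℝ T ∪ spectrum ℝ ((1 + η) • N) ∪
      spectrum ℝ (fromBlocks ((1 + η) • N) 0 0 C))
    (((((spec_finite _).union (spec_finite _)).union (spec_finite _)).union
      (spec_finite _)).union (spec_finite _))
  rw [cfc_eq_aeval hTp.isHermitian g p (fun x hx => hp x (by simp [hx])),
    cfc_eq_aeval hBlk.isHermitian g p (fun x hx => hp x (by simp only [Set.mem_union]; tauto)),
    aeval_diagBlocks, hT, hN, hD, aeval_rotBlocks, ← hN] at key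
  rw [cfc_eq_aeval hAp.isHermitian g p (fun x hx => hp x (by simp [hx])),
    cfc_eq_aeval hBp.isHermitian g p (fun x hx => hp x (by simp [hx])),
    cfc_eq_aeval h1N.isHermitian g p (fun x hx => hp x (by simp only [Set.mem_union]; tauto))]
  exact key.submatrix Sum.inl

open scoped MatrixOrder

theorem spec_pos {k : Type} [Fintype k] [DecidableEq k] {A : Matrix k k ℂ} (hA : A.PosDef)
    {x : ℝ} (hx : x ∈ spectrum ℝ A) : 0 < x := by
  have := hA.isHermitian.spectrum_real_eq_range_eigenvalues
  rw [this] at hx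
  obtain ⟨i, rfl⟩ := hx
  exact hA.eigenvalues_pos i

theorem cfc_scale {k : Type} [Fintype k] [DecidableEq k] {g : ℝ → ℝ} (hg : OpAntitone g)
    {N : Matrix k k ℂ} (hN : N.PosDef) {a b : ℝ} (ha : 0 < a) (hab : a ≤ b) :
    LoewnerLE (cfc g (a • N)) ((b / a) • cfc g (b • N)) := by
  have hcont : ∀ f : ℝ → ℝ, ∀ s : Set ℝ, s.Finite → ContinuousOn f s :=
    fun f s hs => hs.continuousOn f
  have hNs := hN.isHermitian.isSelfAdjoint
  rw [← cfc_comp_const_mul a g N (hcont _ _ ((spec_finite N).image _)) hNs,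
    ← cfc_comp_const_mul b g N (hcont _ _ ((spec_finite N).image _)) hNs,
    ← cfc_smul (b / a) _ N (hcont _ _ (spec_finite N))]
  refine cfc_mono (fun x hx => ?_) (hcont _ _ (spec_finite N)) (hcont _ _ (spec_finite N))
  have hx0 := spec_pos hN hx
  have := scalar_main hg (a := a * x) (b := b * x) (by positivity) (by gcongr)
  rwa [mul_div_mul_right _ _ hx0.ne'] at this

theorem spec_le {k : Type} [Fintype k] [DecidableEq k] {A : Matrix k k ℂ} (hA : A.IsHermitian)
    {m : ℝ} : LoewnerLE (m • (1 : Matrix k k ℂ)) A → ∀ x ∈ spectrum ℝ A, m ≤ x := by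
  intro h
  refine (algebraMap_le_iff_le_spectrum (A := Matrix k k ℂ) (a := A) (r := m)
    hA.isSelfAdjoint).1 ?_
  rw [Algebra.algebraMap_eq_smul_one]
  exact h

theorem spec_ge {k : Type} [Fintype k] [DecidableEq k] {A : Matrix k k ℂ} (hA : A.IsHermitian)
    {M : ℝ} : LoewnerLE A (M • (1 : Matrix k k ℂ)) → ∀ x ∈ spectrum ℝ A, x ≤ M := by
  intro h
  refine (le_algebraMap_iff_spectrum_le (A := Matrix k k ℂ) (a := A) (r := M)
    hA.isSelfAdjoint).1 ?_
  rw [Algebra.algebraMap_eq_smul_one]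
  exact h

/-- linear bounds on the inverse -/
theorem inv_bound {k : Type} [Fintype k] [DecidableEq k] {A : Matrix k k ℂ} (hA : A.PosDef)
    (c d e : ℝ) (h : ∀ x ∈ spectrum ℝ A, 0 ≤ c + d * x + e * x⁻¹) :
    (c • (1 : Matrix k k ℂ) + d • A + e • A⁻¹).PosSemidef := by
  have hcont : ∀ f : ℝ → ℝ, ContinuousOn f (spectrum ℝ A) :=
    fun f => (spec_finite A).continuousOn f
  have hAs := hA.isHermitian.isSelfAdjoint
  have hinv : cfc (fun x : ℝ => x⁻¹) A = A⁻¹ := by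
    have := cfc_inv_id (R := ℝ) hA.isUnit.unit hAs
    simpa using this
  have h0 : 0 ≤ cfc (fun x : ℝ => c + d * x + e * x⁻¹) A := cfc_nonneg h
  rw [cfc_add A _ _ (hcont _) (hcont _), cfc_add A _ _ (hcont _) (hcont _), cfc_const c A hAs,
    cfc_const_mul d _ A (hcont _), cfc_const_mul e _ A (hcont _), cfc_id' ℝ A hAs, hinv,
    Algebra.algebraMap_eq_smul_one] at h0
  exact nonneg_iff_posSemidef.1 h0

theorem inv_swap {k : Type} [Fintype k] [DecidableEq k] {P Q : Matrix k k ℂ} (hP : P.PosDef)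
    (hQ : Q.PosDef) (h : (P - Q⁻¹).PosSemidef) : (Q - P⁻¹).PosSemidef := by
  haveI := hP.isUnit.invertible
  haveI := hQ.isUnit.invertible
  have h1 := (PosDef.fromBlocks₂₂ P (1 : Matrix k k ℂ) hQ).2 (by simpa using h)
  have h2 := (PosDef.fromBlocks₁₁ (1 : Matrix k k ℂ) Q hP).1 h1
  simpa using h2

theorem hmean_ge {k : Type} [Fintype k] [DecidableEq k] {A B : Matrix k k ℂ} {m M : ℝ}
    (hm : 0 < m) (hmM : m < M)
    (hA1 : LoewnerLE (m • (1 : Matrix k k ℂ)) A) (hA2 : LoewnerLE A (M • (1 : Matrix k k ℂ)))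
    (hB1 : LoewnerLE (m • (1 : Matrix k k ℂ)) B) (hB2 : LoewnerLE B (M • (1 : Matrix k k ℂ))) :
    LoewnerLE ((4 * M * m / (M + m) ^ 2) • ((2:ℝ)⁻¹ • (A + B))) (hmean A B) := by
  have hM : 0 < M := hm.trans hmM
  have hAp := posDef_of_ge hm hA1
  have hBp := posDef_of_ge hm hB1
  set N := (2:ℝ)⁻¹ • (A + B) with hN
  set H := (2:ℝ)⁻¹ • (A⁻¹ + B⁻¹) with hH
  have hNp : N.PosDef := (hAp.add hBp).smul (by norm_num : (0:ℝ) < 2⁻¹)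
  have hHp : H.PosDef := (hAp.inv.add hBp.inv).smul (by norm_num : (0:ℝ) < 2⁻¹)
  set K := (M + m) ^ 2 / (4 * M * m) with hK
  have hK0 : 0 < K := by positivity
  have bd : ∀ X : Matrix k k ℂ, X.PosDef → LoewnerLE (m • (1 : Matrix k k ℂ)) X →
      LoewnerLE X (M • (1 : Matrix k k ℂ)) →
      (((M + m) / (M * m)) • (1 : Matrix k k ℂ) + (-(M * m)⁻¹) • X + (-1 : ℝ) • X⁻¹).PosSemidef := by
    intro X hX h1 h2
    refine inv_bound hX _ _ _ fun x hx => ?_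
    have a1 := spec_le hX.isHermitian h1 x hx
    have a2 := spec_ge hX.isHermitian h2 x hx
    have hx0 : 0 < x := hm.trans_le a1
    have : (M + m) / (M * m) + -(M * m)⁻¹ * x + -1 * x⁻¹ = (M - x) * (x - m) / (M * m * x) := by
      field_simp; ring
    rw [this]
    exact div_nonneg (mul_nonneg (by linarith) (by linarith)) (by positivity)
  have bN : ((-((M + m) / (M * m))) • (1 : Matrix k k ℂ) + (M * m)⁻¹ • N + K • N⁻¹).PosSemidef := by
    refine inv_bound hNp _ _ _ fun x hx => ?_
    have hx0 := spec_pos hNp hx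
    have : -((M + m) / (M * m)) + (M * m)⁻¹ * x + K * x⁻¹ =
        (2 * x - (M + m)) ^ 2 / (4 * (M * m * x)) := by
      rw [hK]; field_simp; ring
    rw [this]
    positivity
  have hsum : (K • N⁻¹ - (H⁻¹)⁻¹).PosSemidef := by
    have s := (((bd A hAp hA1 hA2).add (bd B hBp hB1 hB2)).smul
      (by norm_num : (0:ℝ) ≤ 2⁻¹)).add bN
    rw [nonsing_inv_nonsing_inv _ ((isUnit_iff_isUnit_det _).1 hHp.isUnit)]
    convert s using 1
    rw [hH]
    generalize N⁻¹ = N' 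
    rw [hN]
    module
  have := inv_swap (hNp.inv.smul hK0) hHp.inv hsum
  have e : (K • N⁻¹)⁻¹ = (4 * M * m / (M + m) ^ 2) • N := by
    apply inv_eq_right_inv
    rw [smul_mul_smul_comm, nonsing_inv_mul _ ((isUnit_iff_isUnit_det _).1 hNp.isUnit), hK]
    rw [div_mul_div_cancel₀ (by positivity), div_self (by positivity), one_smul]
  rw [e] at this
  exact this

theorem core {k : Type} [Fintype k] [DecidableEq k] {g : ℝ → ℝ} (hg : OpAntitone g)
    {A B : Matrix k k ℂ} {m M : ℝ}
    (hm : 0 < m) (hmM : m < M)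
    (hA1 : LoewnerLE (m • (1 : Matrix k k ℂ)) A) (hA2 : LoewnerLE A (M • (1 : Matrix k k ℂ)))
    (hB1 : LoewnerLE (m • (1 : Matrix k k ℂ)) B) (hB2 : LoewnerLE B (M • (1 : Matrix k k ℂ))) :
    (((((M - m) ^ 2 / (4 * M * m)) * g m) • (1 : Matrix k k ℂ)) -
      (cfc g (hmean A B) - (2 : ℝ)⁻¹ • (cfc g A + cfc g B))).PosSemidef := by
  have hM : 0 < M := hm.trans hmM
  have hAp := posDef_of_ge hm hA1
  have hBp := posDef_of_ge hm hB1
  have hle := hmean_ge hm hmM hA1 hA2 hB1 hB2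
  set N := (2:ℝ)⁻¹ • (A + B) with hN
  have hNp : N.PosDef := (hAp.add hBp).smul (by norm_num : (0:ℝ) < 2⁻¹)
  have hHp : (hmean A B).PosDef :=
    ((hAp.inv.add hBp.inv).smul (by norm_num : (0:ℝ) < 2⁻¹)).inv
  set K := (M + m) ^ 2 / (4 * M * m) with hK
  have hK0 : 0 < K := by positivity
  have hK1 : K - 1 = (M - m) ^ 2 / (4 * M * m) := by rw [hK]; field_simp; ring
  have hKge : 0 ≤ K - 1 := by rw [hK1]; positivity
  have hKinv : 4 * M * m / (M + m) ^ 2 = K⁻¹ := by rw [hK, inv_div]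
  rw [hKinv] at hle
  have hgm : ∀ X : Matrix k k ℂ, X.PosDef → LoewnerLE (m • (1 : Matrix k k ℂ)) X →
      (g m • (1 : Matrix k k ℂ) - cfc g X).PosSemidef := by
    intro X hX h1
    have := hg.2.2 k _ _ (posDef_smul_one hm) hX h1
    rwa [← Algebra.algebraMap_eq_smul_one, cfc_algebraMap, Algebra.algebraMap_eq_smul_one] at this
  set S := (2:ℝ)⁻¹ • (cfc g A + cfc g B) with hS
  have hherm : ∀ X : Matrix k k ℂ, (cfc g X).IsHermitian := fun X => cfc_predicate g X
  have hSh : S.IsHermitian := by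
    simp [IsHermitian, hS, conjTranspose_smul, (hherm _).eq]
  have main : (K • S - cfc g (hmean A B)).PosSemidef := by
    refine posSemidef_of_eta (R := K • S) ?_ fun η hη => ?_
    · simp [IsHermitian, conjTranspose_smul, (hherm _).eq, hSh.eq]
    · have hKi : K⁻¹ ≤ 1 + η := by
        have : K⁻¹ ≤ 1 := inv_le_one_of_one_le₀ (by linarith)
        linarith
      have h1 : (cfc g (K⁻¹ • N) - cfc g (hmean A B)).PosSemidef :=
        hg.2.2 k _ _ (hNp.smul (inv_pos.2 hK0)) hHp hle
      have h2 := cfc_scale hg hNp (inv_pos.2 hK0) hKi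
      have h3 := convex_aux hg hm hη hA1 hB1
      unfold LoewnerLE at h2 h3
      have hnn : (0:ℝ) ≤ (1 + η) / K⁻¹ := by positivity
      have h4 := (h1.add h2).add (h3.smul hnn)
      convert h4 using 1
      rw [← hN, ← hS]
      have : (1 + η) / K⁻¹ = K + η * K := by field_simp
      rw [this]
      module
  have hfin := main.add ((((hgm A hAp hA1).add (hgm B hBp hB1)).smul
      (by norm_num : (0:ℝ) ≤ 2⁻¹)).smul hKge)
  convert hfin using 1
  rw [← hK1, hS]
  module

end helpers2

theorem gruss_antitone {ι κ : Type} [Fintype ι] [DecidableEq ι] [Fintype κ] [DecidableEq κ]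
    (Φ : Matrix ι ι ℂ →ₗ[ℂ] Matrix κ κ ℂ)
    (hΦ : ∀ X : Matrix ι ι ℂ, X.PosSemidef → (Φ X).PosSemidef) (hΦ1 : Φ 1 = 1)
    (g : ℝ → ℝ) (hg : OpAntitone g)
    (A B : Matrix ι ι ℂ) (m M : ℝ) (hm : 0 < m) (hmM : m < M)
    (hA1 : LoewnerLE (m • (1 : Matrix ι ι ℂ)) A) (hA2 : LoewnerLE A (M • (1 : Matrix ι ι ℂ)))
    (hB1 : LoewnerLE (m • (1 : Matrix ι ι ℂ)) B) (hB2 : LoewnerLE B (M • (1 : Matrix ι ι ℂ))) :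
    LoewnerLE (Φ (cfc g (hmean A B)) - (2 : ℝ)⁻¹ • (Φ (cfc g A) + Φ (cfc g B)))
      ((((M - m) ^ 2 / (4 * M * m)) * g m) • (1 : Matrix κ κ ℂ)) := by
  have h := hΦ _ (core hg hm hmM hA1 hA2 hB1 hB2)
  unfold LoewnerLE
  convert h using 1
  simp only [map_sub, map_add, LinearMap.map_smul_of_tower, hΦ1]
end

section
/- Let A and B be positive definite complex matrices such that s·A ≤ B ≤ t·A for some scalars 0 < s ≤ t. Then (√(st)·A + B)/2 ≤ ((√s+√t)/2)·(A ♯ B). -/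
open Matrix ComplexOrder

open scoped MatrixOrder in
theorem aux_spec {n : Type} [Fintype n] [DecidableEq n] (X : Matrix n n ℂ) (hX : X.PosSemidef)
    (x : ℝ) (hx : x ∈ spectrum ℝ X) : 0 ≤ x := by
  exact spectrum_nonneg_of_nonneg (Matrix.nonneg_iff_posSemidef.mpr hX) hx

theorem aux_herm {n : Type} [Fintype n] [DecidableEq n] (X : Matrix n n ℂ) :
    (msqrt X).IsHermitian := by
  have : IsSelfAdjoint (cfc Real.sqrt X) := cfc_predicate _ _
  exact this

theorem aux_cont {n : Type} [Fintype n] [DecidableEq n] (X : Matrix n n ℂ) (f : ℝ → ℝ) :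
    ContinuousOn f (spectrum ℝ X) := (Matrix.finite_real_spectrum (A := X)).continuousOn f

theorem aux_sq {n : Type} [Fintype n] [DecidableEq n] (X : Matrix n n ℂ) (hX : X.PosSemidef) :
    msqrt X * msqrt X = X := by
  have hsa : IsSelfAdjoint X := hX.1
  unfold msqrt
  rw [← cfc_mul _ _ X (aux_cont _ _) (aux_cont _ _)]
  conv_rhs => rw [← cfc_id ℝ X]
  exact cfc_congr fun x hx => Real.mul_self_sqrt (aux_spec X hX x hx)

open scoped MatrixOrder in
theorem aux_main {n : Type} [Fintype n] [DecidableEq n] (X : Matrix n n ℂ) (hX : X.PosSemidef)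
    (s t : ℝ) (hs : 0 < s) (hst : s ≤ t)
    (h1 : (X - s • (1 : Matrix n n ℂ)).PosSemidef) (h2 : (t • (1 : Matrix n n ℂ) - X).PosSemidef) :
    ((Real.sqrt s + Real.sqrt t) • msqrt X - (Real.sqrt (s * t) • (1 : Matrix n n ℂ) + X)).PosSemidef := by
  have hsa : IsSelfAdjoint X := hX.1
  have e : (Real.sqrt s + Real.sqrt t) • msqrt X - (Real.sqrt (s * t) • (1 : Matrix n n ℂ) + X)
      = cfc (fun x : ℝ => (Real.sqrt s + Real.sqrt t) * Real.sqrt x - (Real.sqrt (s * t) + x)) X := by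
    rw [cfc_sub _ _ X (aux_cont _ _) (aux_cont _ _), cfc_const_mul _ _ X (aux_cont _ _),
      cfc_const_add _ _ X (aux_cont _ _), cfc_id' ℝ X, Algebra.algebraMap_eq_smul_one]
    rfl
  rw [e, ← Matrix.nonneg_iff_posSemidef]
  apply cfc_nonneg
  intro x hx
  have hsx : s ≤ x := by
    have : x - s ∈ spectrum ℝ (X - s • (1 : Matrix n n ℂ)) := by
      rw [← Algebra.algebraMap_eq_smul_one, ← spectrum.sub_singleton_eq]
      exact Set.sub_mem_sub hx rfl
    linarith [aux_spec _ h1 _ this]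
  have hxt : x ≤ t := by
    have : t - x ∈ spectrum ℝ (t • (1 : Matrix n n ℂ) - X) := by
      rw [← Algebra.algebraMap_eq_smul_one, ← spectrum.singleton_sub_eq]
      exact Set.sub_mem_sub rfl hx
    linarith [aux_spec _ h2 _ this]
  rw [Real.sqrt_mul hs.le]
  have a := Real.sqrt_le_sqrt hsx
  have b := Real.sqrt_le_sqrt hxt
  have c := Real.mul_self_sqrt (hs.le.trans hsx)
  nlinarith [mul_nonneg (sub_nonneg.2 a) (sub_nonneg.2 b)]

theorem sqrt_st_arith_le_geom {n : Type} [Fintype n] [DecidableEq n]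
    (A B : Matrix n n ℂ) (hA : A.PosDef) (hB : B.PosDef)
    (s t : ℝ) (hs : 0 < s) (hst : s ≤ t)
    (hsA : LoewnerLE (s • A) B) (htA : LoewnerLE B (t • A)) :
    LoewnerLE ((2 : ℝ)⁻¹ • (Real.sqrt (s * t) • A + B))
      (((Real.sqrt s + Real.sqrt t) / 2) • gmean A B) := by
  set P := msqrt A with hP
  have hPh : Pᴴ = P := aux_herm A
  have hPP : P * P = A := aux_sq A hA.posSemidef
  have hu : IsUnit P.det := by
    have := (Matrix.isUnit_iff_isUnit_det _).1 hA.isUnit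
    rw [← hPP, Matrix.det_mul] at this
    exact isUnit_of_mul_isUnit_left this
  have hQh : (P⁻¹)ᴴ = P⁻¹ := by rw [Matrix.conjTranspose_nonsing_inv, hPh]
  have hPQ : P * P⁻¹ = 1 := Matrix.mul_nonsing_inv _ hu
  have hQP : P⁻¹ * P = 1 := Matrix.nonsing_inv_mul _ hu
  have hQA : P⁻¹ * A * P⁻¹ = 1 := by
    rw [← hPP, ← mul_assoc, hQP, one_mul, hPQ]
  have conj : ∀ M : Matrix n n ℂ, M.PosSemidef → (P⁻¹ * M * P⁻¹).PosSemidef := by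
    intro M hM
    have := hM.conjTranspose_mul_mul_same P⁻¹
    rwa [hQh] at this
  have h := aux_main (P⁻¹ * B * P⁻¹) (conj _ hB.posSemidef) s t hs hst
    (by
      have := conj _ hsA
      rwa [mul_sub, sub_mul, mul_smul_comm, smul_mul_assoc, hQA] at this)
    (by
      have := conj _ htA
      rwa [mul_sub, sub_mul, mul_smul_comm, smul_mul_assoc, hQA] at this)
  have h' := (h.conjTranspose_mul_mul_same P).smul (show (0 : ℝ) ≤ 2⁻¹ by norm_num)
  unfold LoewnerLE
  convert h' using 1
  have hB' : P * (P⁻¹ * B * P⁻¹) * P = B := by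
    rw [mul_assoc, mul_assoc, hQP, mul_one, ← mul_assoc, hPQ, one_mul]
  rw [hPh, mul_sub, sub_mul, mul_add, add_mul, hB', mul_smul_comm, smul_mul_assoc, mul_smul_comm,
    smul_mul_assoc, mul_one, hPP, smul_sub, smul_smul, gmean, ← hP, div_eq_inv_mul]
end

section
/- (Operator Diaz–Metcalf type inequality.) Let Φ be a positive linear map from n×n to m×m complex matrices, let f : ℝ → ℝ be operator monotone on [0,∞), and let A, B be positive definite n×n complex matrices with s·A ≤ B ≤ t·A for some scalars 0 < s ≤ t with √(st) ≥ 1. Then (Φ(f(√(st)·A)) + Φ(f(B)))/2 ≤ ((√s+√t)/2)²·Φ(f(A ! B)). -/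
open Matrix ComplexOrder

section helpers
open scoped MatrixOrder

lemma cfc_intertwine {k l : Type} [Fintype k] [DecidableEq k] [Fintype l] [DecidableEq l]
    (f : ℝ → ℝ) (X : Matrix l l ℂ) (A : Matrix k k ℂ) (V : Matrix l k ℂ)
    (hX : X.IsHermitian) (hA : A.IsHermitian) (h : X * V = V * A) :
    cfc f X * V = V * cfc f A := by
  classical
  have fX := Matrix.finite_real_spectrum (A := X)
  have fA := Matrix.finite_real_spectrum (A := A)
  set S : Finset ℝ := (fX.union fA).toFinset
  set p : Polynomial ℝ := Lagrange.interpolate S id f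
  have hp : ∀ x ∈ S, f x = p.eval x := fun x hx => by
    have := Lagrange.eval_interpolate_at_node (s := S) (v := id) f Function.injective_id.injOn hx
    exact this.symm
  have e1 : cfc f X = Polynomial.aeval X p := by
    rw [← cfc_polynomial p X hX.isSelfAdjoint]
    exact cfc_congr fun x hx => hp x (by simp [S, hx])
  have e2 : cfc f A = Polynomial.aeval A p := by
    rw [← cfc_polynomial p A hA.isSelfAdjoint]
    exact cfc_congr fun x hx => hp x (by simp [S, hx])
  rw [e1, e2]
  generalize p = q
  have hpow : ∀ i : ℕ, X ^ i * V = V * A ^ i := by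
    intro i
    induction i with
    | zero => simp
    | succ i ih => rw [pow_succ, Matrix.mul_assoc, h, ← Matrix.mul_assoc, ih, Matrix.mul_assoc, ← pow_succ]
  induction q using Polynomial.induction_on' with
  | add p q hp hq => simp [Matrix.add_mul, Matrix.mul_add, hp, hq]
  | monomial i a =>
    simp only [Polynomial.aeval_monomial, Algebra.algebraMap_eq_smul_one, Matrix.smul_mul,
      Matrix.mul_smul, hpow, smul_mul_assoc, one_mul]

lemma psd_limit {k : Type} [Fintype k] [DecidableEq k] (M : Matrix k k ℂ)
    (h : ∀ δ : ℝ, 0 < δ → (M + δ • (1 : Matrix k k ℂ)).PosSemidef) : M.PosSemidef := by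
  have hH : M.IsHermitian := by
    have h1 := (h 1 one_pos).isHermitian
    have := h1.sub (Matrix.isHermitian_one (n := k) (α := ℂ))
    simpa using this
  refine .of_dotProduct_mulVec_nonneg hH fun x => ?_
  have hx : 0 ≤ star x ⬝ᵥ x := dotProduct_star_self_nonneg x
  have key : ∀ δ : ℝ, 0 < δ → 0 ≤ star x ⬝ᵥ M *ᵥ x + δ • (star x ⬝ᵥ x) := by
    intro δ hδ
    have := (h δ hδ).dotProduct_mulVec_nonneg x
    simpa [Matrix.add_mulVec, dotProduct_add, Matrix.smul_mulVec] using this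
  have ht : Filter.Tendsto (fun δ : ℝ => star x ⬝ᵥ M *ᵥ x + δ • (star x ⬝ᵥ x))
      (nhdsWithin 0 (Set.Ioi 0)) (nhds (star x ⬝ᵥ M *ᵥ x)) := by
    have : Continuous (fun δ : ℝ => star x ⬝ᵥ M *ᵥ x + δ • (star x ⬝ᵥ x)) := by fun_prop
    have := (this.tendsto 0).mono_left (nhdsWithin_le_nhds (s := Set.Ioi 0))
    simpa using this
  exact ge_of_tendsto ht (by filter_upwards [self_mem_nhdsWithin] with δ hδ using key δ hδ)

lemma cfc_limit {k : Type} [Fintype k] [DecidableEq k] (f : ℝ → ℝ) (hf : ContinuousOn f (Set.Ici 0))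
    (Y : Matrix k k ℂ) (hY : Y.PosSemidef) (δ : ℝ) (hδ : 0 < δ) :
    ∃ ε : ℝ, 0 < ε ∧ LoewnerLE (cfc f (Y + ε • (1 : Matrix k k ℂ))) (cfc f Y + δ • (1 : Matrix k k ℂ)) := by
  have fY := Matrix.finite_real_spectrum (A := Y)
  have hpos : ∀ y ∈ spectrum ℝ Y, 0 ≤ y := fun y hy =>
    spectrum_nonneg_of_nonneg (Matrix.nonneg_iff_posSemidef.2 hY) hy
  have hev : ∀ᶠ ε in nhdsWithin (0:ℝ) (Set.Ioi 0), ∀ y ∈ spectrum ℝ Y, f (y + ε) ≤ f y + δ := by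
    rw [Filter.eventually_all_finite fY]
    intro y hy
    have hc := hf y (hpos y hy)
    have hm : Filter.Tendsto (fun ε : ℝ => y + ε) (nhdsWithin 0 (Set.Ioi 0)) (nhdsWithin y (Set.Ici 0)) := by
      apply tendsto_nhdsWithin_of_tendsto_nhds_of_eventually_within
      · have : Continuous (fun ε : ℝ => y + ε) := by fun_prop
        simpa using (this.tendsto 0).mono_left (nhdsWithin_le_nhds (s := Set.Ioi 0))
      · filter_upwards [self_mem_nhdsWithin] with ε hε
        exact add_nonneg (hpos y hy) (le_of_lt hε)
    have := (hc.tendsto.comp hm).eventually (Iio_mem_nhds (show f y < f y + δ by linarith))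
    filter_upwards [this] with ε hε using le_of_lt hε
  obtain ⟨ε, h1, h2⟩ := (hev.and self_mem_nhdsWithin).exists
  refine ⟨ε, h2, ?_⟩
  have hsa : IsSelfAdjoint Y := hY.isHermitian.isSelfAdjoint
  have c1 : ∀ g : ℝ → ℝ, ContinuousOn g (spectrum ℝ Y) := fun g => fY.continuousOn g
  have e0 : Y + ε • (1 : Matrix k k ℂ) = cfc (fun x : ℝ => x + ε) Y := by
    rw [cfc_add_const ε (fun x => x) Y, cfc_id' ℝ Y, Algebra.algebraMap_eq_smul_one]
  have e1 : cfc f (Y + ε • (1 : Matrix k k ℂ)) = cfc (fun x => f (x + ε)) Y := by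
    rw [e0, ← cfc_comp' f (fun x => x + ε) Y ((fY.image _).continuousOn _)]
  have e2 : cfc f Y + δ • (1 : Matrix k k ℂ) = cfc (fun x => f x + δ) Y := by
    rw [cfc_add_const δ f Y (c1 _), Algebra.algebraMap_eq_smul_one]
  rw [e1, e2]
  exact cfc_mono (fun x hx => h1 x hx) (c1 _) (c1 _)

lemma opmono_concave {k : Type} [Fintype k] [DecidableEq k] (f : ℝ → ℝ) (hf : OpMonotone f)
    (A B : Matrix k k ℂ) (hA : A.PosSemidef) (hB : B.PosSemidef) (a b : ℝ) (ha : 0 ≤ a) (hb : 0 ≤ b)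
    (hab : a + b = 1) :
    LoewnerLE (a • cfc f A + b • cfc f B) (cfc f (a • A + b • B)) := by
  obtain ⟨hc, -, hmono⟩ := hf
  obtain ⟨c, hc2⟩ : ∃ c : ℝ, c * c = a := ⟨√a, Real.mul_self_sqrt ha⟩
  obtain ⟨d, hd2⟩ : ∃ d : ℝ, d * d = b := ⟨√b, Real.mul_self_sqrt hb⟩
  have hY : (a • A + b • B).PosSemidef := (hA.smul ha).add (hB.smul hb)
  set Y := a • A + b • B with hYdef
  have key : ∀ ε : ℝ, 0 < ε →
      LoewnerLE (a • cfc f A + b • cfc f B) (cfc f (Y + ε • (1 : Matrix k k ℂ))) := by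
    intro ε hε
    set V1 : Matrix (k ⊕ k) k ℂ := fromRows (c • 1) ((-d) • 1) with hV1
    set V2 : Matrix (k ⊕ k) k ℂ := fromRows (d • 1) (c • 1) with hV2
    set E1 : Matrix (k ⊕ k) k ℂ := fromRows 1 0 with hE1
    set D : Matrix k k ℂ := (c * d) • (B - A) with hD
    have hDH : D.IsHermitian := (hB.isHermitian.sub hA.isHermitian).smul (IsSelfAdjoint.all _)
    set G : Matrix k k ℂ := (b • A + a • B) + ε⁻¹ • (D * D) with hG
    set X : Matrix (k ⊕ k) (k ⊕ k) ℂ := fromBlocks Y D D (b • A + a • B) with hXd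
    set Z : Matrix (k ⊕ k) (k ⊕ k) ℂ := fromBlocks (Y + ε • 1) 0 0 G with hZd
    have hXeq : X = V1 * A * V1ᴴ + V2 * B * V2ᴴ := by
      rw [hXd, hV1, hV2, conjTranspose_fromRows_eq_fromCols_conjTranspose,
        conjTranspose_fromRows_eq_fromCols_conjTranspose, fromRows_mul _ _ A, fromRows_mul _ _ B,
        fromRows_mul_fromCols, fromRows_mul_fromCols, fromBlocks_add, hYdef, hD, ← hc2, ← hd2]
      congr 1 <;> simp [smul_smul, smul_sub] <;> module
    have hX : X.PosSemidef := by
      rw [hXeq]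
      exact (hA.mul_mul_conjTranspose_same V1).add (hB.mul_mul_conjTranspose_same V2)
    have hXZ : LoewnerLE X Z := by
      have : Z - X = fromRows ((√ε) • (1 : Matrix k k ℂ)) (-(√ε)⁻¹ • D) *
          (fromRows ((√ε) • (1 : Matrix k k ℂ)) (-(√ε)⁻¹ • D))ᴴ := by
        have h1 : √ε * √ε = ε := Real.mul_self_sqrt hε.le
        have h2 : √ε ≠ 0 := (Real.sqrt_pos.2 hε).ne'
        have h3 : (√ε)⁻¹ * (√ε)⁻¹ = ε⁻¹ := by rw [← mul_inv, h1]
        rw [conjTranspose_fromRows_eq_fromCols_conjTranspose, fromRows_mul_fromCols, hZd, hXd,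
          sub_eq_add_neg, fromBlocks_neg, fromBlocks_add]
        congr 1 <;> simp [smul_smul, hDH.eq, h1, h2, h3, hG]
        abel
      unfold LoewnerLE
      rw [this]
      exact posSemidef_self_mul_conjTranspose _
    have hZ : Z.IsHermitian := by
      have := hXZ.isHermitian.add hX.isHermitian
      simpa using this
    have i1 := cfc_intertwine f X A V1 hX.isHermitian hA.isHermitian (by
      rw [hXd, hV1, fromBlocks_mul_fromRows, fromRows_mul, hYdef, hD, ← hc2, ← hd2]
      have h : d * d = 1 - c * c := by linarith
      congr 1 <;> simp [smul_smul, smul_sub] <;> match_scalars <;> grind)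
    have i2 := cfc_intertwine f X B V2 hX.isHermitian hB.isHermitian (by
      rw [hXd, hV2, fromBlocks_mul_fromRows, fromRows_mul, hYdef, hD, ← hc2, ← hd2]
      have h : d * d = 1 - c * c := by linarith
      congr 1 <;> simp [smul_smul, smul_sub] <;> match_scalars <;> grind)
    have i3 := cfc_intertwine f Z (Y + ε • 1) E1 hZ
      (hY.isHermitian.add (isHermitian_one.smul (IsSelfAdjoint.all _))) (by
      rw [hZd, hE1, fromBlocks_mul_fromRows, fromRows_mul]
      simp)
    have hE : E1 = c • V1 + d • V2 := by
      have h : c * c + d * d = 1 := by linarith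
      ext i j
      rcases i with i | i
      · have : c * (c * (1 : Matrix k k ℂ) i j) + d * (d * (1 : Matrix k k ℂ) i j)
          = (1 : Matrix k k ℂ) i j := by
          have h' : (c * c + d * d : ℂ) = 1 := by exact_mod_cast h
          linear_combination ((1 : Matrix k k ℂ) i j) * h'
        simp [hE1, hV1, hV2, this]
      · simp [hE1, hV1, hV2]; ring
    have hm := (hmono _ X Z hX hXZ).conjTranspose_mul_mul_same E1
    have hEE : E1ᴴ * E1 = 1 := by
      rw [hE1, conjTranspose_fromRows_eq_fromCols_conjTranspose, fromCols_mul_fromRows]; simp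
    have hEV1 : E1ᴴ * V1 = c • 1 := by
      rw [hE1, hV1, conjTranspose_fromRows_eq_fromCols_conjTranspose, fromCols_mul_fromRows]; simp
    have hEV2 : E1ᴴ * V2 = d • 1 := by
      rw [hE1, hV2, conjTranspose_fromRows_eq_fromCols_conjTranspose, fromCols_mul_fromRows]; simp
    have r1 : E1ᴴ * cfc f Z * E1 = cfc f (Y + ε • 1) := by
      rw [Matrix.mul_assoc, i3, ← Matrix.mul_assoc, hEE, Matrix.one_mul]
    have r2 : E1ᴴ * cfc f X * E1 = a • cfc f A + b • cfc f B := by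
      have : cfc f X * E1 = c • (V1 * cfc f A) + d • (V2 * cfc f B) := by
        rw [hE, Matrix.mul_add, Matrix.mul_smul, Matrix.mul_smul, i1, i2]
      rw [Matrix.mul_assoc, this, Matrix.mul_add, Matrix.mul_smul, Matrix.mul_smul,
        ← Matrix.mul_assoc, ← Matrix.mul_assoc, hEV1, hEV2, ← hc2, ← hd2]
      simp [smul_smul]
    unfold LoewnerLE
    rw [← r1, ← r2, ← Matrix.sub_mul, ← Matrix.mul_sub]
    exact hm
  apply psd_limit
  intro δ hδ
  obtain ⟨ε, hε, h⟩ := cfc_limit f hc Y hY δ hδ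
  have := (key ε hε).add h
  convert this using 1
  abel

lemma opmono_scale {k : Type} [Fintype k] [DecidableEq k] (f : ℝ → ℝ) (hf : OpMonotone f)
    (H : Matrix k k ℂ) (hH : H.PosSemidef) (K : ℝ) (hK : 1 ≤ K) :
    LoewnerLE (cfc f (K • H)) (K • cfc f H) := by
  have hK0 : 0 < K := by linarith
  have h := opmono_concave f hf (K • H) 0 (hH.smul hK0.le) .zero K⁻¹ (1 - K⁻¹) (by positivity)
    (by rw [sub_nonneg]; exact inv_le_one_of_one_le₀ hK) (by ring)
  have h0 : (cfc f (0 : Matrix k k ℂ)).PosSemidef := by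
    have e : cfc f (0 : Matrix k k ℂ) = (f 0) • (1 : Matrix k k ℂ) := by
      have := cfc_algebraMap (A := Matrix k k ℂ) (p := IsSelfAdjoint) (0:ℝ) f
      simpa [Algebra.algebraMap_eq_smul_one] using this
    rw [e]
    exact PosSemidef.one.smul (hf.2.1 0 le_rfl)
  have h2 := (h.smul hK0.le).add (h0.smul (show 0 ≤ K - 1 by linarith))
  unfold LoewnerLE
  convert h2 using 1
  rw [smul_zero, add_zero, smul_smul, inv_mul_cancel₀ hK0.ne', one_smul, smul_sub, smul_add,
    smul_smul, smul_smul, mul_inv_cancel₀ hK0.ne', mul_sub, mul_inv_cancel₀ hK0.ne']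
  module

lemma mean_ineq {k : Type} [Fintype k] [DecidableEq k] (A B : Matrix k k ℂ) (hA : A.PosDef)
    (hB : B.PosDef) (s t c K : ℝ) (hc : 1 ≤ c) (hcc : c * c = s * t) (hK : 4 * K = s + t + 2 * c)
    (hs : 0 < s) (hsA : LoewnerLE (s • A) B) (htA : LoewnerLE B (t • A)) :
    LoewnerLE ((2 : ℝ)⁻¹ • (c • A + B)) (K • hmean A B) := by
  obtain ⟨S, hSH, hSS, hSu⟩ : ∃ S : Matrix k k ℂ, Sᴴ = S ∧ S * S = A ∧ IsUnit S := by
    have h := CFC.sqrt_mul_sqrt_self A hA.posSemidef.nonneg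
    refine ⟨CFC.sqrt A, (CFC.sqrt_nonneg A).posSemidef.isHermitian.eq, h, ?_⟩
    have hu := hA.isUnit
    rw [← h] at hu
    exact isUnit_of_mul_isUnit_left hu
  have hdet : IsUnit S.det := (Matrix.isUnit_iff_isUnit_det S).1 hSu
  set T := S⁻¹ with hT
  have hTS : T * S = 1 := Matrix.nonsing_inv_mul S hdet
  have hST : S * T = 1 := Matrix.mul_nonsing_inv S hdet
  have hTH : Tᴴ = T := by rw [hT, conjTranspose_nonsing_inv, hSH]
  set C := T * B * T with hC
  have hSCS : S * C * S = B := by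
    calc S * C * S = (S * T) * B * (T * S) := by simp only [hC, Matrix.mul_assoc]
      _ = B := by simp [hST, hTS]
  have hTAT : T * A * T = 1 := by
    calc T * A * T = (T * S) * (S * T) := by simp only [← hSS, Matrix.mul_assoc]
      _ = 1 := by simp [hST, hTS]
  have hCpd : C.PosSemidef := by
    have := hB.posSemidef.conjTranspose_mul_mul_same T
    rwa [hTH] at this
  have hCu : IsUnit C := by
    have hTu : IsUnit T := ⟨⟨T, S, hTS, hST⟩, rfl⟩
    exact (hTu.mul hB.isUnit).mul hTu
  have h1 : 0 ≤ C - s • (1 : Matrix k k ℂ) := by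
    have := hsA.conjTranspose_mul_mul_same T
    rw [hTH, Matrix.mul_sub, Matrix.sub_mul, Matrix.mul_smul, Matrix.smul_mul, hTAT] at this
    exact this.nonneg
  have h2 : 0 ≤ t • (1 : Matrix k k ℂ) - C := by
    have := htA.conjTranspose_mul_mul_same T
    rw [hTH, Matrix.mul_sub, Matrix.sub_mul, Matrix.mul_smul, Matrix.smul_mul, hTAT] at this
    exact this.nonneg
  have hq1 : 0 ≤ (C - s • (1 : Matrix k k ℂ)) * (t • (1 : Matrix k k ℂ) - C) := by
    apply Commute.mul_nonneg h1 h2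
    have a1 : ∀ r : ℝ, Commute C (r • (1 : Matrix k k ℂ)) := fun r => (Commute.one_right C).smul_right r
    exact Commute.sub_left ((a1 t).sub_right (Commute.refl C))
      ((((Commute.one_left _).smul_left s)))
  have hq2 : 0 ≤ (c - 1) • (C + c • (1 : Matrix k k ℂ)) :=
    ((hCpd.add (PosSemidef.one.smul (by linarith : (0:ℝ) ≤ c))).smul
      (by linarith : (0:ℝ) ≤ c - 1)).nonneg
  have hq := add_nonneg hq1 hq2
  set q := (C - s • (1 : Matrix k k ℂ)) * (t • (1 : Matrix k k ℂ) - C)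
    + (c - 1) • (C + c • (1 : Matrix k k ℂ)) with hqd
  have hqe : q = (4 * K) • C - (1 + C) * (c • 1 + C) := by
    rw [hqd, hK]
    simp only [sub_mul, mul_sub, add_mul, mul_add, one_mul, mul_one, smul_mul_assoc, mul_smul_comm,
      smul_smul, smul_add, sub_mul, sub_smul, one_smul, hcc]
    module
  have h1C : (1 + C).PosDef := PosDef.one.add_posSemidef hCpd
  have hdet1 : IsUnit (1 + C).det := (Matrix.isUnit_iff_isUnit_det _).1 h1C.isUnit
  set W := (1 + C)⁻¹ with hW
  have hW1 : W * (1 + C) = 1 := Matrix.nonsing_inv_mul _ hdet1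
  have hW2 : (1 + C) * W = 1 := Matrix.mul_nonsing_inv _ hdet1
  have hWC : Commute W C := by
    have e1 : W * C = 1 - W := by rw [eq_sub_iff_add_eq', ← hW1]; noncomm_ring
    have e2 : C * W = 1 - W := by rw [eq_sub_iff_add_eq', ← hW2]; noncomm_ring
    exact e1.trans e2.symm
  have hWq : Commute W q := by
    rw [hqe]
    have o : Commute W 1 := Commute.one_right W
    exact (hWC.smul_right _).sub_right ((o.add_right hWC).mul_right ((o.smul_right c).add_right hWC))
  have hfin : 0 ≤ W * q := Commute.mul_nonneg h1C.inv.posSemidef.nonneg hq hWq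
  have hWqe : W * q = (4 * K) • (W * C) - (c • 1 + C) := by
    rw [hqe, Matrix.mul_sub, ← Matrix.mul_assoc, hW1, Matrix.one_mul, Matrix.mul_smul]
  have hmean_eq : hmean A B = (2:ℝ) • (S * (W * C) * S) := by
    unfold hmean
    apply Matrix.inv_eq_left_inv
    have hdC : IsUnit C.det := (Matrix.isUnit_iff_isUnit_det _).1 hCu
    have eA : A⁻¹ = T * T := by rw [← hSS, Matrix.mul_inv_rev]
    have eB : B⁻¹ = T * C⁻¹ * T := by
      rw [← hSCS, Matrix.mul_inv_rev, Matrix.mul_inv_rev, Matrix.mul_assoc]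
    have e : A⁻¹ + B⁻¹ = T * (1 + C⁻¹) * T := by rw [eA, eB]; noncomm_ring
    have e3 : (W * C) * (1 + C⁻¹) = 1 := by
      rw [Matrix.mul_add, Matrix.mul_assoc W C C⁻¹, Matrix.mul_nonsing_inv C hdC, Matrix.mul_one,
        ← Matrix.mul_add, add_comm C 1, hW1]
    have e4 : (S * (W * C) * S) * (T * (1 + C⁻¹) * T) = 1 := by
      calc (S * (W * C) * S) * (T * (1 + C⁻¹) * T)
          = S * (W * C) * (S * T) * (1 + C⁻¹) * T := by simp only [Matrix.mul_assoc]
        _ = S * ((W * C) * (1 + C⁻¹)) * T := by rw [hST]; simp only [Matrix.mul_assoc, Matrix.one_mul]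
        _ = 1 := by rw [e3, Matrix.mul_one, hST]
    rw [e, Matrix.smul_mul, Matrix.mul_smul, e4, smul_smul]
    norm_num
  have hcong := ((Matrix.nonneg_iff_posSemidef.1 hfin).conjTranspose_mul_mul_same S).smul
    (show (0:ℝ) ≤ 2⁻¹ by norm_num)
  have e : K • hmean A B - (2 : ℝ)⁻¹ • (c • A + B) = (2 : ℝ)⁻¹ • (Sᴴ * (W * q) * S) := by
    rw [hSH, hWqe, hmean_eq, Matrix.mul_sub, Matrix.sub_mul, Matrix.mul_add, Matrix.add_mul, hSCS,
    Matrix.mul_smul, Matrix.smul_mul, Matrix.mul_smul, Matrix.smul_mul, Matrix.mul_one, hSS]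
    module
  unfold LoewnerLE
  rw [e]
  exact hcong

lemma hmean_psd {k : Type} [Fintype k] [DecidableEq k] (A B : Matrix k k ℂ) (hA : A.PosDef)
    (hB : B.PosDef) : (hmean A B).PosSemidef :=
  ((hA.inv.posSemidef.add hB.inv.posSemidef).smul (show (0:ℝ) ≤ 2⁻¹ by norm_num)).inv

lemma loewner_trans {k : Type} [Fintype k] {X Y Z : Matrix k k ℂ} (h : LoewnerLE X Y)
    (h' : LoewnerLE Y Z) : LoewnerLE X Z := by
  have := h.add h'
  unfold LoewnerLE
  convert this using 1
  abel

end helpers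

theorem diaz_metcalf_sqrt_st_ge_one {n m : Type} [Fintype n] [DecidableEq n] [Fintype m] [DecidableEq m]
    (Φ : Matrix n n ℂ →ₗ[ℂ] Matrix m m ℂ)
    (hΦ : ∀ X : Matrix n n ℂ, X.PosSemidef → (Φ X).PosSemidef)
    (f : ℝ → ℝ) (hf : OpMonotone f)
    (A B : Matrix n n ℂ) (hA : A.PosDef) (hB : B.PosDef)
    (s t : ℝ) (hs : 0 < s) (hst : s ≤ t) (h1 : 1 ≤ Real.sqrt (s * t))
    (hsA : LoewnerLE (s • A) B) (htA : LoewnerLE B (t • A)) :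
    LoewnerLE ((2 : ℝ)⁻¹ • (Φ (cfc f (Real.sqrt (s * t) • A)) + Φ (cfc f B)))
      ((((Real.sqrt s + Real.sqrt t) / 2) ^ 2) • Φ (cfc f (hmean A B))) := by
  have hst0 : 0 ≤ s * t := by nlinarith
  have ht : 0 ≤ t := hs.le.trans hst
  set c := Real.sqrt (s * t) with hc
  set K := ((Real.sqrt s + Real.sqrt t) / 2) ^ 2 with hKd
  have hcc : c * c = s * t := Real.mul_self_sqrt hst0
  have hK : 4 * K = s + t + 2 * c := by
    rw [hKd, hc, Real.sqrt_mul hs.le]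
    have e1 := Real.sq_sqrt hs.le
    have e2 := Real.sq_sqrt ht
    linear_combination e1 + e2
  have hc2 : 2 * c ≤ s + t := by
    have : c ≤ (s + t) / 2 := Real.sqrt_le_iff.2 ⟨by linarith, by nlinarith [sq_nonneg (s - t)]⟩
    linarith
  have hK1 : 1 ≤ K := by linarith
  have hH := hmean_psd A B hA hB
  have hcA : (c • A).PosSemidef := hA.posSemidef.smul (by linarith : (0:ℝ) ≤ c)
  have m1 := opmono_concave f hf (c • A) B hcA hB.posSemidef (2⁻¹) (2⁻¹) (by norm_num)
    (by norm_num) (by norm_num)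
  rw [← smul_add, ← smul_add] at m1
  have m2 := hf.2.2 n _ _ ((hcA.add hB.posSemidef).smul (show (0:ℝ) ≤ 2⁻¹ by norm_num))
    (mean_ineq A B hA hB s t c K h1 hcc hK hs hsA htA)
  have m3 := opmono_scale f hf _ hH K hK1
  have m := hΦ _ (loewner_trans m1 (loewner_trans m2 m3))
  have hsm : ∀ (r : ℝ) (M : Matrix n n ℂ), Φ (r • M) = r • Φ M := fun r M =>
    LinearMap.map_smul_of_tower Φ r M
  rw [map_sub, hsm, hsm, map_add] at m
  exact m
end

section
/- (Operator Diaz–Metcalf type inequality, second case.) Let Φ be a positive linear map from n×n to m×m complex matrices, let f : ℝ → ℝ be operator monotone on [0,∞), and let A, B be positive definite n×n complex matrices with s·A ≤ B ≤ t·A for some scalars 0 < s ≤ t with √(st) ≤ 1. Then (Φ(f(√(st)·A)) + Φ(f(B)))/2 ≤ ((√s+√t)²/(4√(st)))·Φ(f(A ! B)). -/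
open Matrix ComplexOrder

section aux
variable {n : Type} [Fintype n] [DecidableEq n]

lemma aux_trans {A B C : Matrix n n ℂ} (h1 : LoewnerLE A B) (h2 : LoewnerLE B C) :
    LoewnerLE A C := by
  unfold LoewnerLE at *
  have := h2.add h1
  rwa [sub_add_sub_cancel] at this

lemma aux_psmul {A : Matrix n n ℂ} (h : A.PosSemidef) {c : ℝ} (hc : 0 ≤ c) :
    (c • A).PosSemidef := h.smul hc

lemma aux_pdsmul {A : Matrix n n ℂ} (h : A.PosDef) {c : ℝ} (hc : 0 < c) :
    (c • A).PosDef := h.smul hc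

lemma aux_limit {A B : Matrix n n ℂ} (hA : A.IsHermitian) (hB : B.IsHermitian) (c : ℝ)
    (h : ∀ k : ℝ, c < k → LoewnerLE A (k • B)) : LoewnerLE A (c • B) := by
  unfold LoewnerLE at *
  have hh : (c • B - A).IsHermitian := by
    have := (h (c+1) (by linarith)).1
    have h2 : (c • B).IsHermitian := by
      unfold Matrix.IsHermitian
      rw [Matrix.conjTranspose_smul, hB.eq]; simp
    exact h2.sub hA
  refine Matrix.PosSemidef.of_dotProduct_mulVec_nonneg hh fun x => ?_
  have key : ∀ k : ℝ, c < k → 0 ≤ (k:ℂ) * (star x ⬝ᵥ (B *ᵥ x)) - star x ⬝ᵥ (A *ᵥ x) := by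
    intro k hk
    have := (h k hk).dotProduct_mulVec_nonneg x
    simpa [Matrix.sub_mulVec, Matrix.smul_mulVec, dotProduct_sub, dotProduct_smul] using this
  have goal : 0 ≤ (c:ℂ) * (star x ⬝ᵥ (B *ᵥ x)) - star x ⬝ᵥ (A *ᵥ x) := by
    have ht : Filter.Tendsto (fun k : ℝ => (k:ℂ) * (star x ⬝ᵥ (B *ᵥ x)) - star x ⬝ᵥ (A *ᵥ x))
        (nhdsWithin c (Set.Ioi c)) (nhds ((c:ℂ) * (star x ⬝ᵥ (B *ᵥ x)) - star x ⬝ᵥ (A *ᵥ x))) := by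
      apply tendsto_nhdsWithin_of_tendsto_nhds
      apply Continuous.tendsto
      fun_prop
    refine ge_of_tendsto ht ?_
    filter_upwards [self_mem_nhdsWithin] with k hk using key k hk
  simpa [Matrix.sub_mulVec, Matrix.smul_mulVec, dotProduct_sub, dotProduct_smul] using goal

lemma aux_poly (f : ℝ → ℝ) {X : Matrix n n ℂ} (hX : X.IsHermitian) (p : Polynomial ℝ)
    (hp : ∀ x ∈ spectrum ℝ X, p.eval x = f x) : cfc f X = Polynomial.aeval X p := by
  have hX' : IsSelfAdjoint X := hX
  rw [← cfc_polynomial p X]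
  exact cfc_congr fun x hx => (hp x hx).symm

lemma aux_interp (f : ℝ → ℝ) {S : Set ℝ} (hS : S.Finite) :
    ∃ p : Polynomial ℝ, ∀ x ∈ S, p.eval x = f x := by
  refine ⟨Lagrange.interpolate hS.toFinset id f, fun x hx => ?_⟩
  exact Lagrange.eval_interpolate_at_node (s := hS.toFinset) (v := id) f (Set.injOn_id _) (by simpa using hx)

lemma aux_fin (X : Matrix n n ℂ) : (spectrum ℝ X).Finite := Matrix.finite_real_spectrum

lemma aux_psd (f : ℝ → ℝ) (hf : OpMonotone f) {X : Matrix n n ℂ} (hX : X.PosSemidef) :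
    (cfc f X).PosSemidef := by
  open scoped MatrixOrder in
  rw [← Matrix.nonneg_iff_posSemidef]
  refine cfc_nonneg fun x hx => hf.2.1 x ?_
  have : 0 ≤ X := Matrix.nonneg_iff_posSemidef.2 hX
  exact spectrum_nonneg_of_nonneg this hx

lemma aux_aeval_blocks (X Y : Matrix n n ℂ) (p : Polynomial ℝ) :
    Polynomial.aeval (fromBlocks X 0 0 Y) p =
      fromBlocks (Polynomial.aeval X p) 0 0 (Polynomial.aeval Y p) := by
  induction p using Polynomial.induction_on' with
  | add p q hp hq => simp [hp, hq, fromBlocks_add]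
  | monomial k a =>
    simp only [Polynomial.aeval_monomial, Matrix.fromBlocks_diagonal_pow, Algebra.algebraMap_eq_smul_one,
      smul_mul_assoc, one_mul, fromBlocks_smul, smul_zero]

lemma aux_aeval_conj (W V D : Matrix n n ℂ) (h : W * V = 1) (p : Polynomial ℝ) :
    Polynomial.aeval (V * D * W) p = V * Polynomial.aeval D p * W := by
  have h' : V * W = 1 := mul_eq_one_comm.1 h
  have hp : ∀ k : ℕ, (V * D * W) ^ k = V * D ^ k * W := by
    intro k
    induction k with
    | zero => simp [h']
    | succ k ih =>
      rw [pow_succ, ih, pow_succ]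
      calc V * D ^ k * W * (V * D * W) = V * D ^ k * (W * V) * D * W := by noncomm_ring
        _ = _ := by rw [h]; noncomm_ring
  induction p using Polynomial.induction_on' with
  | add p q hp hq => simp [hp, hq, mul_add, add_mul]
  | monomial k a =>
    simp only [Polynomial.aeval_monomial, hp, Algebra.algebraMap_eq_smul_one,
      smul_mul_assoc, one_mul, mul_smul_comm]

lemma aux_fsub (A B C D A' B' C' D' : Matrix n n ℂ) :
    fromBlocks A B C D - fromBlocks A' B' C' D' = fromBlocks (A - A') (B - B') (C - C') (D - D') := by
  ext i j
  cases i <;> cases j <;> rfl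

lemma aux_block (E R : Matrix n n ℂ) (hE : E.PosDef) (hR : R.IsHermitian) :
    (fromBlocks E (-R) (-R) (R * E⁻¹ * R)).PosSemidef := by
  haveI : Invertible E := hE.isUnit.invertible
  have := (Matrix.PosDef.fromBlocks₁₁ (-R) (R * E⁻¹ * R) hE).2 (by
    simp [hR.eq, PosSemidef.zero])
  simpa [hR.eq] using this

lemma aux_concave (f : ℝ → ℝ) (hf : OpMonotone f) {X Y E : Matrix n n ℂ}
    (hX : X.PosSemidef) (hY : Y.PosSemidef) (hE : E.PosDef) (a b : ℝ) (hab : a ^ 2 + b ^ 2 = 1) :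
    LoewnerLE (a ^ 2 • cfc f X + b ^ 2 • cfc f Y) (cfc f (a ^ 2 • X + b ^ 2 • Y + E)) := by
  set W : Matrix (n ⊕ n) (n ⊕ n) ℂ := fromBlocks (a • 1) (-(b • 1)) (b • 1) (a • 1) with hW
  set V : Matrix (n ⊕ n) (n ⊕ n) ℂ := fromBlocks (a • 1) (b • 1) (-(b • 1)) (a • 1) with hV
  have hVW : Wᴴ = V := by
    simp [hW, hV, fromBlocks_conjTranspose, Matrix.conjTranspose_smul]
  have h1 : W * V = 1 := by
    rw [hW, hV, fromBlocks_multiply, ← fromBlocks_one]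
    have e1 : (a * a) • (1 : Matrix n n ℂ) + (b * b) • (1 : Matrix n n ℂ) = 1 := by
      rw [← add_smul, ← sq, ← sq, hab, one_smul]
    congr 1
    · simp [smul_smul, e1]
    · simp [smul_smul, mul_comm]
    · simp [smul_smul, mul_comm]
    · simp [smul_smul]; rw [add_comm, e1]
  set D : Matrix (n ⊕ n) (n ⊕ n) ℂ := fromBlocks X 0 0 Y with hD
  set R : Matrix n n ℂ := (a * b) • (Y - X) with hR
  have hRh : R.IsHermitian := by
    unfold Matrix.IsHermitian
    rw [hR, Matrix.conjTranspose_smul, (hY.1.sub hX.1).eq]; simp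
  have hDp : D.PosSemidef := by
    rw [hD]
    refine Matrix.PosSemidef.of_dotProduct_mulVec_nonneg
      (Matrix.IsHermitian.fromBlocks hX.1 (by simp) hY.1) fun x => ?_
    rw [← Sum.elim_comp_inl_inr x, fromBlocks_mulVec]
    have e : star (Sum.elim (x ∘ Sum.inl) (x ∘ Sum.inr)) =
      Sum.elim (star (x ∘ Sum.inl)) (star (x ∘ Sum.inr)) := by
      ext i; cases i <;> rfl
    rw [e, sumElim_dotProduct_sumElim]
    simpa using add_nonneg (hX.dotProduct_mulVec_nonneg (x ∘ Sum.inl)) (hY.dotProduct_mulVec_nonneg (x ∘ Sum.inr))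
  have hZp : (V * D * W).PosSemidef := by
    rw [← hVW]; exact hDp.conjTranspose_mul_mul_same W
  have hZ : V * D * W = fromBlocks (a ^ 2 • X + b ^ 2 • Y) R R (b ^ 2 • X + a ^ 2 • Y) := by
    rw [hV, hW, hD, fromBlocks_multiply, fromBlocks_multiply, hR]
    congr 1 <;> simp [smul_smul, smul_sub] <;> module
  set P := a ^ 2 • X + b ^ 2 • Y with hP
  set Q := b ^ 2 • X + a ^ 2 • Y with hQ
  set N := R * E⁻¹ * R with hN
  have hle : LoewnerLE (V * D * W) (fromBlocks (P + E) 0 0 (Q + N)) := by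
    unfold LoewnerLE
    rw [hZ, aux_fsub]
    simpa using aux_block E R hE hRh
  have hmon := hf.2.2 _ _ _ hZp hle
  have hUh : (fromBlocks (P + E) 0 0 (Q + N)).IsHermitian := by
    have := hle.1.add hZp.1
    rwa [sub_add_cancel] at this
  have hUh1 : (P + E).IsHermitian := (Matrix.isHermitian_fromBlocks_iff.1 hUh).1
  obtain ⟨p, hp⟩ := aux_interp f ((((aux_fin X).union (aux_fin Y)).union (aux_fin (V * D * W))).union
    ((aux_fin (fromBlocks (P + E) 0 0 (Q + N))).union (aux_fin (P + E))))
  rw [aux_poly f hX.1 p (fun x hx => hp x (by simp [hx])),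
    aux_poly f hY.1 p (fun x hx => hp x (by simp [hx])),
    aux_poly f hUh1 p (fun x hx => hp x (by simp [hx]))]
  rw [aux_poly f hZp.1 p (fun x hx => hp x (by simp [hx])),
    aux_poly f hUh p (fun x hx => hp x (by simp only [Set.mem_union, hx]; simp)),
    aux_aeval_conj _ _ _ h1, hD, aux_aeval_blocks, aux_aeval_blocks, hV, hW,
    fromBlocks_multiply, fromBlocks_multiply] at hmon
  unfold LoewnerLE at hmon ⊢
  rw [aux_fsub] at hmon
  have := hmon.submatrix Sum.inl
  have e : ∀ (A B C D : Matrix n n ℂ), (fromBlocks A B C D).submatrix Sum.inl Sum.inl = A := by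
    intros; ext; rfl
  rw [e] at this
  simpa [smul_smul, ← sq] using this

lemma aux_scale (f : ℝ → ℝ) (hf : OpMonotone f) {H : Matrix n n ℂ} (hH : H.PosDef)
    (k l : ℝ) (hk : 1 ≤ k) (hkl : k < l) : LoewnerLE (cfc f (k • H)) (l • cfc f H) := by
  have hl : 0 < l := by linarith
  have h := aux_concave f hf (X := k • H) (Y := 0) (E := (1 - k / l) • H)
    (aux_pdsmul hH (by linarith)).posSemidef PosSemidef.zero
    (aux_pdsmul hH (by rw [sub_pos, div_lt_one hl]; exact hkl))
    (Real.sqrt (1 / l)) (Real.sqrt (1 - 1 / l)) (by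
      rw [Real.sq_sqrt (by positivity), Real.sq_sqrt]; ring
      rw [sub_nonneg, div_le_one hl]; linarith)
  have h1l : (1 / l) ≤ 1 := by rw [div_le_one hl]; linarith
  rw [Real.sq_sqrt (by positivity), Real.sq_sqrt (by linarith)] at h
  have e : (1 / l) • k • H + (1 - 1 / l) • (0 : Matrix n n ℂ) + (1 - k / l) • H = H := by
    rw [smul_zero, add_zero, smul_smul, ← add_smul]
    convert one_smul ℝ H using 2
    ring
  rw [e] at h
  have h0 := aux_psmul (aux_psd f hf (PosSemidef.zero (n := n) (R := ℂ))) (c := 1 - 1 / l) (by linarith)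
  unfold LoewnerLE at h ⊢
  have h2 := aux_psmul (h.add h0) hl.le
  convert h2 using 1
  rw [sub_add_eq_sub_sub, sub_add_cancel, smul_sub, smul_smul, mul_one_div_cancel hl.ne', one_smul]

lemma aux_lin (L : Matrix n n ℂ) (d : n → ℝ) (x y : ℝ) :
    Lᴴ * diagonal (fun i => ((x + y * d i : ℝ) : ℂ)) * L =
      x • (Lᴴ * L) + y • (Lᴴ * diagonal (fun i => (d i : ℂ)) * L) := by
  have : diagonal (fun i => ((x + y * d i : ℝ) : ℂ)) =
      x • (1 : Matrix n n ℂ) + y • diagonal (fun i => (d i : ℂ)) := by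
    ext i j
    by_cases h : i = j
    · subst h; simp
    · simp [h]
  rw [this]
  simp [mul_add, add_mul]

lemma aux_diag {A B : Matrix n n ℂ} (hA : A.PosDef) (hB : B.IsHermitian) :
    ∃ (L : Matrix n n ℂ) (d : n → ℝ), IsUnit L ∧ A = Lᴴ * L ∧
      B = Lᴴ * diagonal (fun i => (d i : ℂ)) * L := by
  obtain ⟨K, hK, rfl⟩ : ∃ K : Matrix n n ℂ, IsUnit K ∧ A = Kᴴ * K := by
    have hs := hA.1.spectral_theorem
    rw [Unitary.conjStarAlgAut_apply] at hs
    refine ⟨diagonal (fun i => ((Real.sqrt (hA.1.eigenvalues i) : ℝ) : ℂ)) *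
      star (hA.1.eigenvectorUnitary : Matrix n n ℂ), ?_, ?_⟩
    · refine IsUnit.mul ?_ ?_
      · rw [Matrix.isUnit_iff_isUnit_det, det_diagonal, isUnit_iff_ne_zero, Finset.prod_ne_zero_iff]
        intro i _
        have := Real.sqrt_pos.2 (hA.eigenvalues_pos i)
        exact_mod_cast this.ne'
      · exact (Unitary.isUnit_coe (U := hA.1.eigenvectorUnitary)).star
    · conv_lhs => rw [hs]
      rw [conjTranspose_mul, star_eq_conjTranspose, conjTranspose_conjTranspose, diagonal_conjTranspose]
      have e : (diagonal (RCLike.ofReal ∘ hA.1.eigenvalues) : Matrix n n ℂ) =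
          diagonal (star fun i => ((Real.sqrt (hA.1.eigenvalues i) : ℝ) : ℂ)) *
          diagonal (fun i => ((Real.sqrt (hA.1.eigenvalues i) : ℝ) : ℂ)) := by
        rw [diagonal_mul_diagonal]
        congr 1
        ext i
        simp only [Function.comp, Pi.star_apply, RCLike.star_def, Complex.conj_ofReal]
        rw [← Complex.ofReal_mul, Real.mul_self_sqrt (hA.eigenvalues_pos i).le]
        rfl
      rw [e]
      simp only [Matrix.mul_assoc]
  have hKd := (Matrix.isUnit_iff_isUnit_det K).1 hK
  have hT : ((K⁻¹)ᴴ * B * K⁻¹).IsHermitian := isHermitian_conjTranspose_mul_mul _ hB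
  have hs := hT.spectral_theorem
  rw [Unitary.conjStarAlgAut_apply] at hs
  have hU : (hT.eigenvectorUnitary : Matrix n n ℂ) * star (hT.eigenvectorUnitary : Matrix n n ℂ) = 1 :=
    Unitary.coe_mul_star_self _
  refine ⟨star (hT.eigenvectorUnitary : Matrix n n ℂ) * K, hT.eigenvalues,
    (Unitary.isUnit_coe (U := hT.eigenvectorUnitary)).star.mul hK, ?_, ?_⟩
  · rw [conjTranspose_mul, star_eq_conjTranspose, conjTranspose_conjTranspose, ← star_eq_conjTranspose (hT.eigenvectorUnitary : Matrix n n ℂ)]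
    rw [Matrix.mul_assoc, ← Matrix.mul_assoc _ _ K, hU, Matrix.one_mul]
  · rw [conjTranspose_mul, star_eq_conjTranspose, conjTranspose_conjTranspose, ← star_eq_conjTranspose (hT.eigenvectorUnitary : Matrix n n ℂ)]
    have e2 : Kᴴ * ((K⁻¹)ᴴ * B * K⁻¹) * K = B := by
      have a1 : Kᴴ * (K⁻¹)ᴴ = 1 := by
        rw [← conjTranspose_mul, Matrix.nonsing_inv_mul _ hKd, conjTranspose_one]
      have a2 : K⁻¹ * K = 1 := Matrix.nonsing_inv_mul _ hKd
      calc _ = (Kᴴ * (K⁻¹)ᴴ) * B * (K⁻¹ * K) := by simp only [Matrix.mul_assoc]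
        _ = B := by rw [a1, a2, Matrix.one_mul, Matrix.mul_one]
    have hs' : (K⁻¹)ᴴ * B * K⁻¹ = (hT.eigenvectorUnitary : Matrix n n ℂ) *
      diagonal (fun i => (hT.eigenvalues i : ℂ)) * star (hT.eigenvectorUnitary : Matrix n n ℂ) := hs
    generalize (hT.eigenvectorUnitary : Matrix n n ℂ) = U at *
    generalize hT.eigenvalues = d at *
    rw [hs'] at e2
    rw [← e2]
    simp only [Matrix.mul_assoc]

lemma aux_hmean {A B : Matrix n n ℂ} (hA : A.PosDef) (hB : B.PosDef)
    (s t : ℝ) (hs : 0 < s) (hst : s ≤ t) (h1 : Real.sqrt (s * t) ≤ 1)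
    (hsA : LoewnerLE (s • A) B) (htA : LoewnerLE B (t • A)) :
    LoewnerLE ((2 : ℝ)⁻¹ • (Real.sqrt (s * t) • A + B))
      (((Real.sqrt s + Real.sqrt t) ^ 2 / (4 * Real.sqrt (s * t))) • hmean A B) := by
  obtain ⟨L, d, hL, eA, eB⟩ := aux_diag hA hB.1
  have hLd := (Matrix.isUnit_iff_isUnit_det L).1 hL
  have conj : ∀ D : Matrix n n ℂ, (Lᴴ * D * L).PosSemidef ↔ D.PosSemidef := fun D =>
    Matrix.IsUnit.posSemidef_star_left_conjugate_iff hL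
  have hds : ∀ i, s ≤ d i := by
    intro i
    have : (Lᴴ * diagonal (fun i => ((d i - s : ℝ) : ℂ)) * L).PosSemidef := by
      have e := aux_lin L d (-s) 1
      rw [← eA, ← eB] at e
      unfold LoewnerLE at hsA
      convert hsA using 1
      convert e using 1
      · congr 3; ext i; push_cast; ring
      · module
    rw [conj, posSemidef_diagonal_iff] at this
    have := this i
    rw [Complex.zero_le_real] at this
    linarith
  have hdt : ∀ i, d i ≤ t := by
    intro i
    have : (Lᴴ * diagonal (fun i => ((t - d i : ℝ) : ℂ)) * L).PosSemidef := by
      have e := aux_lin L d t (-1)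
      rw [← eA, ← eB] at e
      unfold LoewnerLE at htA
      convert htA using 1
      convert e using 1
      · congr 3; ext i; push_cast; ring
      · module
    rw [conj, posSemidef_diagonal_iff] at this
    have := this i
    rw [Complex.zero_le_real] at this
    linarith
  have hd0 : ∀ i, 0 < d i := fun i => hs.trans_le (hds i)
  have hH : hmean A B = Lᴴ * diagonal (fun i => ((2 * d i / (1 + d i) : ℝ) : ℂ)) * L := by
    have hL1 : L * L⁻¹ = 1 := Matrix.mul_nonsing_inv _ hLd
    have hL2 : (L⁻¹)ᴴ * Lᴴ = 1 := by rw [← conjTranspose_mul, hL1, conjTranspose_one]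
    have hL3 : L⁻¹ * L = 1 := Matrix.nonsing_inv_mul _ hLd
    have gen : ∀ D D' : Matrix n n ℂ, D * D' = 1 → (Lᴴ * D * L)⁻¹ = L⁻¹ * D' * (L⁻¹)ᴴ := by
      intro D D' h
      apply Matrix.inv_eq_left_inv
      have h' : D' * D = 1 := mul_eq_one_comm.1 h
      calc _ = L⁻¹ * (D' * (((L⁻¹)ᴴ * Lᴴ) * D)) * L := by simp only [Matrix.mul_assoc]
        _ = 1 := by rw [hL2, Matrix.one_mul, h', Matrix.mul_one, hL3]
    have iA : A⁻¹ = L⁻¹ * 1 * (L⁻¹)ᴴ := by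
      rw [← gen 1 1 (by simp), eA, Matrix.mul_one]
    have iB : B⁻¹ = L⁻¹ * diagonal (fun i => ((d i)⁻¹ : ℂ)) * (L⁻¹)ᴴ := by
      rw [eB]
      apply gen
      rw [diagonal_mul_diagonal, ← diagonal_one]
      congr 1; ext i
      have : (d i : ℂ) ≠ 0 := by exact_mod_cast (hd0 i).ne'
      exact mul_inv_cancel₀ this
    have iS : (2:ℝ)⁻¹ • (A⁻¹ + B⁻¹) = L⁻¹ * diagonal (fun i => (2⁻¹ * (1 + (d i)⁻¹) : ℂ)) * (L⁻¹)ᴴ := by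
      have : diagonal (fun i => (2⁻¹ * (1 + (d i)⁻¹) : ℂ)) =
          (2:ℝ)⁻¹ • ((1 : Matrix n n ℂ) + diagonal (fun i => ((d i)⁻¹ : ℂ))) := by
        ext i j
        by_cases h : i = j
        · subst h; simp; ring
        · simp [h]
      rw [this, iA, iB]
      simp [mul_add, add_mul]
    unfold hmean
    rw [iS]
    apply Matrix.inv_eq_left_inv
    have hdd : diagonal (fun i => ((2 * d i / (1 + d i) : ℝ) : ℂ)) *
        diagonal (fun i => (2⁻¹ * (1 + (d i)⁻¹) : ℂ)) = 1 := by
      rw [diagonal_mul_diagonal, ← diagonal_one]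
      congr 1; ext i
      have h1 : (d i : ℂ) ≠ 0 := by exact_mod_cast (hd0 i).ne'
      have h2 : (1 + d i : ℂ) ≠ 0 := by
        have := hd0 i
        exact_mod_cast (show (1 + d i) ≠ 0 by positivity)
      push_cast
      field_simp
      try ring
    have hL4 : Lᴴ * (L⁻¹)ᴴ = 1 := by rw [← conjTranspose_mul, hL3, conjTranspose_one]
    calc _ = Lᴴ * (diagonal (fun i => ((2 * d i / (1 + d i) : ℝ) : ℂ)) * ((L * L⁻¹) *
            diagonal (fun i => (2⁻¹ * (1 + (d i)⁻¹) : ℂ)))) * (L⁻¹)ᴴ := by simp only [Matrix.mul_assoc]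
      _ = 1 := by rw [hL1, Matrix.one_mul, hdd, Matrix.mul_one, hL4]
  rw [LoewnerLE, hH]
  set g := Real.sqrt (s * t) with hg
  set c := (Real.sqrt s + Real.sqrt t) ^ 2 / (4 * g) with hc
  have : (Lᴴ * diagonal (fun i => ((c * (2 * d i / (1 + d i)) - 2⁻¹ * (g + d i) : ℝ) : ℂ)) * L).PosSemidef := by
    rw [conj, posSemidef_diagonal_iff]
    intro i
    rw [Complex.zero_le_real]
    have hg0 : 0 < g := Real.sqrt_pos.2 (by have := hs.trans_le hst; positivity)
    have hgg : g ^ 2 = s * t := Real.sq_sqrt (by have := hs.trans_le hst; positivity)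
    have hcc : c * (4 * g) = s + t + 2 * g := by
      rw [hc, div_mul_cancel₀ _ (by positivity), add_sq, Real.sq_sqrt hs.le,
        Real.sq_sqrt (hs.le.trans hst), hg, Real.sqrt_mul hs.le]
      ring
    have e : c * (2 * d i / (1 + d i)) - 2⁻¹ * (g + d i) =
      ((c * (4 * g)) * d i - g * (g + d i) * (1 + d i)) / (2 * g * (1 + d i)) := by
      have := hd0 i
      field_simp
      ring
    have := hd0 i
    rw [e, hcc]
    apply div_nonneg _ (by positivity)
    nlinarith [mul_nonneg (sub_nonneg.2 (hds i)) (sub_nonneg.2 (hdt i)),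
      mul_nonneg (sub_nonneg.2 h1) (sq_nonneg (d i)),
      mul_nonneg (mul_nonneg hg0.le (sub_nonneg.2 h1)) this.le]
  convert this using 1
  have e := aux_lin L d (2⁻¹ * g) 2⁻¹
  rw [← eA, ← eB] at e
  have e3 : (2 : ℝ)⁻¹ • (g • A + B) = (2⁻¹ * g) • A + (2⁻¹ : ℝ) • B := by module
  rw [e3, ← e]
  have e4 : diagonal (fun i => ((c * (2 * d i / (1 + d i)) - 2⁻¹ * (g + d i) : ℝ) : ℂ)) =
      c • diagonal (fun i => ((2 * d i / (1 + d i) : ℝ) : ℂ)) -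
      diagonal (fun i => ((2⁻¹ * g + 2⁻¹ * d i : ℝ) : ℂ)) := by
    ext i j
    by_cases h : i = j
    · subst h; simp; ring
    · simp [h]
  rw [e4]
  simp [mul_sub, sub_mul]

lemma aux_hmean_pd {A B : Matrix n n ℂ} (hA : A.PosDef) (hB : B.PosDef) : (hmean A B).PosDef :=
  (aux_pdsmul (hA.inv.add hB.inv) (by norm_num)).inv

end aux

theorem diaz_metcalf_sqrt_st_le_one {n m : Type} [Fintype n] [DecidableEq n] [Fintype m] [DecidableEq m]
    (Φ : Matrix n n ℂ →ₗ[ℂ] Matrix m m ℂ)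
    (hΦ : ∀ X : Matrix n n ℂ, X.PosSemidef → (Φ X).PosSemidef)
    (f : ℝ → ℝ) (hf : OpMonotone f)
    (A B : Matrix n n ℂ) (hA : A.PosDef) (hB : B.PosDef)
    (s t : ℝ) (hs : 0 < s) (hst : s ≤ t) (h1 : Real.sqrt (s * t) ≤ 1)
    (hsA : LoewnerLE (s • A) B) (htA : LoewnerLE B (t • A)) :
    LoewnerLE ((2 : ℝ)⁻¹ • (Φ (cfc f (Real.sqrt (s * t) • A)) + Φ (cfc f B)))
      (((Real.sqrt s + Real.sqrt t) ^ 2 / (4 * Real.sqrt (s * t))) • Φ (cfc f (hmean A B))) := by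
  set g := Real.sqrt (s * t) with hg
  set c := (Real.sqrt s + Real.sqrt t) ^ 2 / (4 * g) with hc
  have ht : 0 < t := hs.trans_le hst
  have hg0 : 0 < g := Real.sqrt_pos.2 (by positivity)
  have hc1 : 1 ≤ c := by
    rw [hc, le_div_iff₀ (by positivity), hg, Real.sqrt_mul hs.le]
    nlinarith [sq_nonneg (Real.sqrt s - Real.sqrt t)]
  have hH := aux_hmean_pd hA hB
  have hm := aux_hmean hA hB s t hs hst h1 hsA htA
  rw [← hg, ← hc] at hm
  have hgA := aux_pdsmul hA hg0
  have h2 : Real.sqrt 2⁻¹ ^ 2 = 2⁻¹ := Real.sq_sqrt (by norm_num)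
  have key : LoewnerLE ((2 : ℝ)⁻¹ • (cfc f (g • A) + cfc f B)) (c • cfc f (hmean A B)) := by
    refine aux_limit ?_ (aux_psd f hf hH.posSemidef).1 c fun l hl => ?_
    · exact (aux_psmul ((aux_psd f hf hgA.posSemidef).add (aux_psd f hf hB.posSemidef)) (by norm_num)).1
    have hE := aux_pdsmul hH (c := (l - c) / 2) (by linarith)
    have a1 := aux_concave f hf hgA.posSemidef hB.posSemidef hE (Real.sqrt 2⁻¹) (Real.sqrt 2⁻¹)
      (by rw [h2]; norm_num)
    rw [h2, ← smul_add, ← smul_add] at a1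
    refine aux_trans a1 (aux_trans (hf.2.2 _ _ (((c + l) / 2) • hmean A B) ?_ ?_)
      (aux_scale f hf hH ((c + l) / 2) l (by linarith) (by linarith)))
    · exact ((aux_pdsmul (hgA.add hB) (by norm_num)).add hE).posSemidef
    · unfold LoewnerLE at hm ⊢
      convert hm using 1
      module
  have := hΦ _ key
  unfold LoewnerLE
  rw [map_sub] at this
  simpa only [LinearMap.map_smul_of_tower, map_add] using this
end

section
/- Let Φ be a positive linear map from n×n to m×m complex matrices, let f : ℝ → ℝ be operator monotone on [0,∞), and let A, B be positive definite n×n complex matrices with s·A ≤ B ≤ t·A for some scalars 0 < s ≤ t with s·t ≥ 1. Then (Φ(f(A)) + Φ(f(B)))/2 ≤ ((√s+√t)/2)·Φ(f(A ♯ B)). -/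
open Matrix ComplexOrder

open scoped MatrixOrder

lemma aux_intertwine {n k : Type} [Fintype n] [DecidableEq n] [Fintype k] [DecidableEq k]
    (f : ℝ → ℝ) (X : Matrix k k ℂ) (A : Matrix n n ℂ) (K : Matrix k n ℂ)
    (hX : X.IsHermitian) (hA : A.IsHermitian) (h : X * K = K * A) :
    cfc f X * K = K * cfc f A := by
  classical
  have hXs : IsSelfAdjoint X := hX
  have hAs : IsSelfAdjoint A := hA
  let S : Finset ℝ := (Matrix.finite_real_spectrum (A := X)).toFinset ∪
    (Matrix.finite_real_spectrum (A := A)).toFinset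
  let p : Polynomial ℝ := Lagrange.interpolate S id f
  have hp : ∀ x ∈ S, f x = p.eval x := fun x hx =>
    (Lagrange.eval_interpolate_at_node (v := id) f (fun _ _ _ _ h => h) hx).symm
  have e1 : cfc f X = Polynomial.aeval X p := by
    rw [← cfc_polynomial p X]
    apply cfc_congr
    intro x hx
    exact hp x (by simp [S, hx])
  have e2 : cfc f A = Polynomial.aeval A p := by
    rw [← cfc_polynomial p A]
    apply cfc_congr
    intro x hx
    exact hp x (by simp [S, hx])
  rw [e1, e2]
  generalize p = q
  have hpow : ∀ j : ℕ, X ^ j * K = K * A ^ j := by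
    intro j
    induction j with
    | zero => simp
    | succ j ih => rw [pow_succ, pow_succ, Matrix.mul_assoc, h, ← Matrix.mul_assoc, ih,
        Matrix.mul_assoc]
  induction q using Polynomial.induction_on' with
  | add p q hp hq => simp [Matrix.add_mul, Matrix.mul_add, hp, hq]
  | monomial j c =>
    simp only [Polynomial.aeval_monomial, Algebra.algebraMap_eq_smul_one, smul_mul_assoc, one_mul,
      Matrix.smul_mul, Matrix.mul_smul, hpow]

lemma aux_bound {n : Type} [Fintype n] [DecidableEq n] (H : Matrix n n ℂ) (hH : H.IsHermitian) :
    ∃ g : ℝ, (g • (1 : Matrix n n ℂ) - H).PosSemidef := by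
  have hs : IsSelfAdjoint H := hH
  obtain ⟨g, hg⟩ := (Matrix.finite_real_spectrum (A := H)).bddAbove
  refine ⟨g, ?_⟩
  have := le_algebraMap_of_spectrum_le (R := ℝ) (r := g) (a := H) (fun x hx => hg hx)
  rw [Algebra.algebraMap_eq_smul_one] at this
  exact this

lemma aux_psd_smul {n : Type} [Fintype n] {H : Matrix n n ℂ} (hH : H.PosSemidef) {r : ℝ}
    (hr : 0 ≤ r) : (r • H).PosSemidef := hH.smul hr

lemma aux_key {n : Type} [Fintype n] [DecidableEq n]
    (f : ℝ → ℝ) (hf : OpMonotone f) (A B D : Matrix n n ℂ) (hA : A.PosSemidef)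
    (hB : B.PosSemidef) (a b : ℝ) (hab : a ^ 2 + b ^ 2 = 1)
    (hD : (D - (a ^ 2 • A + b ^ 2 • B)).PosDef) :
    (cfc f D - (a ^ 2 • cfc f A + b ^ 2 • cfc f B)).PosSemidef := by
  let C : Matrix n n ℂ := (a * b) • (B - A)
  let M : Matrix n n ℂ := a ^ 2 • A + b ^ 2 • B
  let N : Matrix n n ℂ := b ^ 2 • A + a ^ 2 • B
  let X : Matrix (n ⊕ n) (n ⊕ n) ℂ := fromBlocks M C C N
  let KA : Matrix (n ⊕ n) n ℂ := fromRows (a • 1) (-(b • 1))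
  let KB : Matrix (n ⊕ n) n ℂ := fromRows (b • 1) (a • 1)
  let E : Matrix (n ⊕ n) n ℂ := fromRows 1 0
  have hM : M.PosSemidef := (aux_psd_smul hA (sq_nonneg _)).add (aux_psd_smul hB (sq_nonneg _))
  have hN : N.PosSemidef := (aux_psd_smul hA (sq_nonneg _)).add (aux_psd_smul hB (sq_nonneg _))
  have hC : Cᴴ = C := by
    simp only [C, conjTranspose_smul, conjTranspose_sub, hA.1.eq, hB.1.eq, star_trivial]
  have hXeq : X = KA * A * KAᴴ + KB * B * KBᴴ := by
    have g1 : KA * A = fromRows (a • A) (-(b • A)) := by simp [KA, fromRows_mul]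
    have g2 : KB * B = fromRows (b • B) (a • B) := by simp [KB, fromRows_mul]
    have g3 : KAᴴ = fromCols (a • 1) (-(b • 1)) := by
      simp [KA, conjTranspose_fromRows_eq_fromCols_conjTranspose]
    have g4 : KBᴴ = fromCols (b • 1) (a • 1) := by
      simp [KB, conjTranspose_fromRows_eq_fromCols_conjTranspose]
    rw [g1, g2, g3, g4, fromRows_mul_fromCols, fromRows_mul_fromCols, fromBlocks_add]
    simp only [X, M, N, C]
    congr 1 <;> simp [smul_smul, smul_sub] <;> module
  have hX : X.PosSemidef := by
    rw [hXeq]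
    exact (hA.mul_mul_conjTranspose_same KA).add (hB.mul_mul_conjTranspose_same KB)
  have hXA : X * KA = KA * A := by
    simp only [X, KA, fromBlocks_mul_fromRows, fromRows_mul, M, N, C]
    congr 1
    · simp [smul_smul, smul_sub, smul_add]
      match_scalars <;> first | ring1 | linear_combination (a : ℝ) * hab
    · simp [smul_smul, smul_sub, smul_add]
      match_scalars <;> first | ring1 | linear_combination (-b : ℝ) * hab
  have hXB : X * KB = KB * B := by
    simp only [X, KB, fromBlocks_mul_fromRows, fromRows_mul, M, N, C]
    congr 1
    · simp [smul_smul, smul_sub, smul_add]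
      match_scalars <;> first | ring1 | linear_combination (b : ℝ) * hab
    · simp [smul_smul, smul_sub, smul_add]
      match_scalars <;> first | ring1 | linear_combination (a : ℝ) * hab
  have hE : E = a • KA + b • KB := by
    have h1 : a * a + b * b = 1 := by linarith [pow_two a, pow_two b]
    ext i j
    rcases i with i | i
    · have h2 : (a : ℂ) * a + b * b = 1 := by exact_mod_cast h1
      simp [E, KA, KB, ← mul_assoc, ← add_mul, h2]
    · simp [E, KA, KB]
      ring
  have hEA : Eᴴ * KA = a • 1 := by
    simp [E, KA, conjTranspose_fromRows_eq_fromCols_conjTranspose, fromCols_mul_fromRows]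
  have hEB : Eᴴ * KB = b • 1 := by
    simp [E, KB, conjTranspose_fromRows_eq_fromCols_conjTranspose, fromCols_mul_fromRows]
  have hEE : Eᴴ * E = 1 := by
    simp [E, conjTranspose_fromRows_eq_fromCols_conjTranspose, fromCols_mul_fromRows]
  have hDh : D.IsHermitian := by
    have := hD.1.add hM.1
    simpa [M] using this
  obtain ⟨g, hg⟩ := aux_bound (N + (-C)ᴴ * (D - M)⁻¹ * (-C))
    (hN.1.add (isHermitian_conjTranspose_mul_mul _ hD.inv.1))
  let Y : Matrix (n ⊕ n) (n ⊕ n) ℂ := fromBlocks D 0 0 (g • 1)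
  have hYX : (Y - X).PosSemidef := by
    have : Invertible (D - M) := hD.isUnit.invertible
    have h : (fromBlocks (D - M) (-C) (-C)ᴴ (g • 1 - N)).PosSemidef :=
      (PosDef.fromBlocks₁₁ (-C) (g • 1 - N) hD).2 (by rw [sub_sub]; exact hg)
    have e : Y - X = fromBlocks (D - M) (-C) (-C)ᴴ (g • 1 - N) := by
      rw [conjTranspose_neg, hC]
      ext (i | i) (j | j) <;> simp [Y, X]
    rw [e]
    exact h
  have hY : Y.PosSemidef := by simpa using hYX.add hX
  have hYE : Y * E = E * D := by
    simp [Y, E, fromBlocks_mul_fromRows, fromRows_mul]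
  have i1 := aux_intertwine f X A KA hX.1 hA.1 hXA
  have i2 := aux_intertwine f X B KB hX.1 hB.1 hXB
  have i3 := aux_intertwine f Y D E hY.1 hDh hYE
  have h0 : (cfc f Y - cfc f X).PosSemidef := hf.2.2 (n ⊕ n) X Y hX hYX
  have h1 := h0.conjTranspose_mul_mul_same E
  have e : Eᴴ * (cfc f Y - cfc f X) * E = cfc f D - (a ^ 2 • cfc f A + b ^ 2 • cfc f B) := by
    have e1 : Eᴴ * cfc f Y * E = cfc f D := by
      rw [Matrix.mul_assoc, i3, ← Matrix.mul_assoc, hEE, Matrix.one_mul]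
    have e2 : Eᴴ * cfc f X * E = a ^ 2 • cfc f A + b ^ 2 • cfc f B := by
      have : cfc f X * E = a • (KA * cfc f A) + b • (KB * cfc f B) := by
        rw [hE, Matrix.mul_add, Matrix.mul_smul, Matrix.mul_smul, i1, i2]
      rw [Matrix.mul_assoc, this, Matrix.mul_add, Matrix.mul_smul, Matrix.mul_smul,
        ← Matrix.mul_assoc, ← Matrix.mul_assoc, hEA, hEB]
      simp [smul_smul, pow_two]
    rw [Matrix.mul_sub, Matrix.sub_mul, e1, e2]
  rwa [e] at h1


lemma aux_msqrt_pd {n : Type} [Fintype n] [DecidableEq n] {A : Matrix n n ℂ} (hA : A.PosDef) :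
    (msqrt A).PosDef ∧ msqrt A * msqrt A = A := by
  have hs : IsSelfAdjoint A := hA.1
  have hsp : ∀ x ∈ spectrum ℝ A, 0 ≤ x :=
    fun x hx => spectrum_nonneg_of_nonneg (nonneg_iff_posSemidef.2 hA.posSemidef) hx
  have h2 : msqrt A * msqrt A = A := by
    unfold msqrt
    rw [← cfc_mul Real.sqrt Real.sqrt A]
    conv_rhs => rw [← cfc_id ℝ A]
    exact cfc_congr (fun x hx => Real.mul_self_sqrt (hsp x hx))
  have h3 : (msqrt A).PosSemidef := by
    rw [← nonneg_iff_posSemidef]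
    exact cfc_nonneg (fun x _ => Real.sqrt_nonneg x)
  refine ⟨?_, h2⟩
  rw [h3.posDef_iff_isUnit]
  have := hA.isUnit
  rw [← h2] at this
  exact isUnit_of_mul_isUnit_left this

lemma aux_mean {n : Type} [Fintype n] [DecidableEq n]
    (A B : Matrix n n ℂ) (hA : A.PosDef) (hB : B.PosDef)
    (s t : ℝ) (hs : 0 < s) (_hst : s ≤ t) (h1 : 1 ≤ s * t)
    (hsA : LoewnerLE (s • A) B) (htA : LoewnerLE B (t • A)) :
    (gmean A B).PosDef ∧
    (((Real.sqrt s + Real.sqrt t) / 2) • gmean A B - (2 : ℝ)⁻¹ • (A + B)).PosSemidef := by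
  obtain ⟨hR, hRR⟩ := aux_msqrt_pd hA
  unfold gmean
  set R := msqrt A with hRdef
  have hRi := hR.inv
  have hu : IsUnit R.det := (Matrix.isUnit_iff_isUnit_det R).1 hR.isUnit
  have c1 : R * R⁻¹ = 1 := Matrix.mul_nonsing_inv R hu
  have c2 : R⁻¹ * R = 1 := Matrix.nonsing_inv_mul R hu
  have conj : ∀ Z : Matrix n n ℂ, Z.PosSemidef → (R⁻¹ * Z * R⁻¹).PosSemidef := by
    intro Z hZ
    have := hZ.mul_mul_conjTranspose_same R⁻¹
    rwa [hRi.1.eq] at this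
  have conj2 : ∀ Z : Matrix n n ℂ, Z.PosSemidef → (R * Z * R).PosSemidef := by
    intro Z hZ
    have := hZ.mul_mul_conjTranspose_same R
    rwa [hR.1.eq] at this
  have hAi : R⁻¹ * A * R⁻¹ = 1 := by
    rw [← hRR, ← Matrix.mul_assoc, c2, Matrix.one_mul, c1]
  set X := R⁻¹ * B * R⁻¹ with hXdef
  have hBX : R * X * R = B := by
    calc R * (R⁻¹ * B * R⁻¹) * R = (R * R⁻¹) * B * (R⁻¹ * R) := by simp only [Matrix.mul_assoc]
      _ = B := by rw [c1, c2, Matrix.one_mul, Matrix.mul_one]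
  have hXpd : X.PosDef := by
    have h3 : X.PosSemidef := conj B hB.posSemidef
    rw [h3.posDef_iff_isUnit]
    exact (hRi.isUnit.mul hB.isUnit).mul hRi.isUnit
  have hXsa : IsSelfAdjoint X := hXpd.1
  obtain ⟨hS, -⟩ := aux_msqrt_pd hXpd
  have hlo : (X - s • 1).PosSemidef := by
    have := conj _ hsA
    rwa [Matrix.mul_sub, Matrix.sub_mul, Matrix.mul_smul, Matrix.smul_mul, hAi] at this
  have hhi : (t • 1 - X).PosSemidef := by
    have := conj _ htA
    rwa [Matrix.mul_sub, Matrix.sub_mul, Matrix.mul_smul, Matrix.smul_mul, hAi] at this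
  have slo : ∀ x ∈ spectrum ℝ X, s ≤ x := by
    refine (algebraMap_le_iff_le_spectrum (a := X)).1 ?_
    rw [Algebra.algebraMap_eq_smul_one]; exact hlo
  have shi : ∀ x ∈ spectrum ℝ X, x ≤ t := by
    refine (le_algebraMap_iff_spectrum_le (a := X)).1 ?_
    rw [Algebra.algebraMap_eq_smul_one]; exact hhi
  refine ⟨?_, ?_⟩
  · have h3 : (R * msqrt X * R).PosSemidef := conj2 _ hS.posSemidef
    rw [h3.posDef_iff_isUnit]
    exact (hR.isUnit.mul hS.isUnit).mul hR.isUnit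
  · have key : (((Real.sqrt s + Real.sqrt t) / 2) • msqrt X - (2 : ℝ)⁻¹ • (1 + X)).PosSemidef := by
      have hle : cfc (fun x : ℝ => (2 : ℝ)⁻¹ • (1 + x)) X ≤
          cfc (fun x : ℝ => ((Real.sqrt s + Real.sqrt t) / 2) • Real.sqrt x) X := by
        refine cfc_mono ?_
        intro x hx
        have hx1 := slo x hx
        have hx2 := shi x hx
        have p1 : 0 < √s := Real.sqrt_pos.2 hs
        have p2 : √s ≤ √x := Real.sqrt_le_sqrt hx1
        have p3 : √x ≤ √t := Real.sqrt_le_sqrt hx2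
        have p4 : √x * √x = x := Real.mul_self_sqrt (by linarith)
        have p5 : 1 ≤ √s * √t := by
          rw [← Real.sqrt_mul hs.le]; exact Real.one_le_sqrt.2 h1
        simp only [smul_eq_mul]
        nlinarith [mul_nonneg (sub_nonneg.2 p2) (sub_nonneg.2 p3)]
      rw [cfc_smul _ _ X, cfc_smul _ _ X, cfc_const_add 1 _ X, cfc_id' ℝ X] at hle
      rw [Matrix.le_iff] at hle
      simpa [msqrt] using hle
    have := conj2 _ key
    convert this using 1
    rw [Matrix.mul_sub, Matrix.sub_mul, Matrix.mul_smul, Matrix.smul_mul, Matrix.mul_smul,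
      Matrix.smul_mul, Matrix.mul_add, Matrix.add_mul, hBX, Matrix.mul_one, hRR]

lemma aux_key' {n : Type} [Fintype n] [DecidableEq n]
    (f : ℝ → ℝ) (hf : OpMonotone f) (A B D : Matrix n n ℂ) (hA : A.PosSemidef)
    (hB : B.PosSemidef) (p q : ℝ) (hp : 0 ≤ p) (hq : 0 ≤ q) (hpq : p + q = 1)
    (hD : (D - (p • A + q • B)).PosDef) :
    (cfc f D - (p • cfc f A + q • cfc f B)).PosSemidef := by
  have := aux_key f hf A B D hA hB √p √q (by rw [Real.sq_sqrt hp, Real.sq_sqrt hq, hpq])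
  rw [Real.sq_sqrt hp, Real.sq_sqrt hq] at this
  exact this hD

lemma aux_limit_s15 {n : Type} [Fintype n] (P Q : Matrix n n ℂ) (hP : P.IsHermitian)
    (h : ∀ r : ℝ, 0 < r → (P + r • Q).PosSemidef) : P.PosSemidef := by
  refine PosSemidef.of_dotProduct_mulVec_nonneg hP fun x => ?_
  have ht : Filter.Tendsto (fun r : ℝ => star x ⬝ᵥ P *ᵥ x + r • (star x ⬝ᵥ Q *ᵥ x))
      (nhdsWithin 0 (Set.Ioi 0)) (nhds (star x ⬝ᵥ P *ᵥ x)) := by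
    have : Continuous (fun r : ℝ => star x ⬝ᵥ P *ᵥ x + r • (star x ⬝ᵥ Q *ᵥ x)) := by fun_prop
    have h2 := this.tendsto 0
    simp only [zero_smul, add_zero] at h2
    exact h2.mono_left nhdsWithin_le_nhds
  refine ge_of_tendsto ht ?_
  filter_upwards [self_mem_nhdsWithin] with r hr
  have := (h r hr).dotProduct_mulVec_nonneg x
  rwa [Matrix.add_mulVec, dotProduct_add, Matrix.smul_mulVec, dotProduct_smul] at this

theorem arith_le_geom_after_map {n m : Type} [Fintype n] [DecidableEq n] [Fintype m] [DecidableEq m]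
    (Φ : Matrix n n ℂ →ₗ[ℂ] Matrix m m ℂ)
    (hΦ : ∀ X : Matrix n n ℂ, X.PosSemidef → (Φ X).PosSemidef)
    (f : ℝ → ℝ) (hf : OpMonotone f)
    (A B : Matrix n n ℂ) (hA : A.PosDef) (hB : B.PosDef)
    (s t : ℝ) (hs : 0 < s) (hst : s ≤ t) (h1 : 1 ≤ s * t)
    (hsA : LoewnerLE (s • A) B) (htA : LoewnerLE B (t • A)) :
    LoewnerLE ((2 : ℝ)⁻¹ • (Φ (cfc f A) + Φ (cfc f B)))
      (((Real.sqrt s + Real.sqrt t) / 2) • Φ (cfc f (gmean A B))) := by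
  obtain ⟨hG, hM⟩ := aux_mean A B hA hB s t hs hst h1 hsA htA
  set G := gmean A B
  set c := (Real.sqrt s + Real.sqrt t) / 2 with hc
  have hc1 : 1 ≤ c := by
    have p5 : 1 ≤ √s * √t := by
      rw [← Real.sqrt_mul hs.le]; exact Real.one_le_sqrt.2 h1
    have p1 : 0 < √s := Real.sqrt_pos.2 hs
    have p2 : √s ≤ √t := Real.sqrt_le_sqrt hst
    nlinarith [sq_nonneg (√s - √t)]
  have hsaA : IsSelfAdjoint A := hA.1
  have hherm : ∀ Z : Matrix n n ℂ, (cfc f Z).IsHermitian := fun Z => cfc_predicate f Z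
  have f0 : (cfc f (0 : Matrix n n ℂ)).PosSemidef := by
    rw [← nonneg_iff_posSemidef]
    refine cfc_nonneg fun x hx => hf.2.1 x ?_
    exact spectrum_nonneg_of_nonneg le_rfl hx
  have main : (c • cfc f G - (2 : ℝ)⁻¹ • (cfc f A + cfc f B)).PosSemidef := by
    refine aux_limit_s15 _ (cfc f G) ?_ ?_
    · have k1 : IsSelfAdjoint (c • cfc f G) := (IsSelfAdjoint.all c).smul (hherm G)
      have k2 : IsSelfAdjoint ((2 : ℝ)⁻¹ • (cfc f A + cfc f B)) :=
        (IsSelfAdjoint.all _).smul (IsSelfAdjoint.add (hherm A) (hherm B))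
      exact k1.sub k2
    · intro r hr
      have hcr : 0 < c + r := by linarith
      have d1 : (cfc f ((c + r / 2) • G) -
          ((2 : ℝ)⁻¹ • cfc f A + (2 : ℝ)⁻¹ • cfc f B)).PosSemidef := by
        refine aux_key' f hf A B _ hA.posSemidef hB.posSemidef _ _ (by norm_num) (by norm_num)
          (by norm_num) ?_
        have := (hG.smul (half_pos hr)).add_posSemidef hM
        convert this using 1
        module
      have d2 : (cfc f G - ((c + r)⁻¹ • cfc f ((c + r / 2) • G) +
          (1 - (c + r)⁻¹) • cfc f 0)).PosSemidef := by
        refine aux_key' f hf _ 0 _ (aux_psd_smul hG.posSemidef (by linarith)) PosSemidef.zero _ _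
          (by positivity) ?_ (by ring) ?_
        · rw [sub_nonneg]
          exact inv_le_one_of_one_le₀ (by linarith)
        · have := hG.smul (show 0 < (c + r)⁻¹ * (r / 2) by positivity)
          convert this using 1
          match_scalars
          field_simp
          ring
      have hq : 0 ≤ 1 - (c + r)⁻¹ := by
        rw [sub_nonneg]
        exact inv_le_one_of_one_le₀ (by linarith)
      have d3 := (aux_psd_smul (d2.add (aux_psd_smul f0 hq)) hcr.le).add d1
      convert d3 using 1
      match_scalars <;> field_simp <;> ring
  have := hΦ _ main
  unfold LoewnerLE
  rwa [map_sub, Φ.map_smul_of_tower, Φ.map_smul_of_tower, map_add] at this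
end

section
/- Let Φ be a positive linear map from n×n to m×m complex matrices, let f : ℝ → ℝ be operator monotone on [0,∞), and let A, B be positive definite n×n complex matrices with s·A ≤ B ≤ t·A for some scalars 0 < s ≤ t with s·t ≥ 1. Then Φ(f(A ♯ B)) ≤ ((√s+√t)/2)·Φ(f(A ! B)). -/
open Matrix ComplexOrder

open scoped MatrixOrder in
lemma two_point {k : Type} [Fintype k] [DecidableEq k] (f : ℝ → ℝ) (Z : Matrix k k ℂ)
    (hZ : Z.IsHermitian) (p q : ℝ) (hpq : p ≠ q)
    (h : (Z - p • (1 : Matrix k k ℂ)) * (Z - q • (1 : Matrix k k ℂ)) = 0) :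
    cfc f Z = (f p - (f q - f p) / (q - p) * p) • (1 : Matrix k k ℂ) + ((f q - f p) / (q - p)) • Z := by
  rw [← Algebra.algebraMap_eq_smul_one, ← Algebra.algebraMap_eq_smul_one] at h
  rw [← Algebra.algebraMap_eq_smul_one]
  have hZ' : IsSelfAdjoint Z := hZ
  have hcont : ∀ g : ℝ → ℝ, ContinuousOn g (spectrum ℝ Z) :=
    fun g => Matrix.finite_real_spectrum.continuousOn g
  have e1 : cfc (fun x : ℝ => (x - p) * (x - q)) Z = cfc (fun _ : ℝ => (0 : ℝ)) Z := by
    rw [cfc_mul _ _ Z (hcont _) (hcont _), cfc_sub _ _ Z (hcont _) (hcont _),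
      cfc_sub _ _ Z (hcont _) (hcont _), cfc_const p Z, cfc_const q Z, cfc_id' ℝ Z, h, cfc_const 0 Z,
      map_zero]
  have hs : ∀ x ∈ spectrum ℝ Z, x = p ∨ x = q := by
    intro x hx
    have := (cfc_eq_cfc_iff_eqOn (R := ℝ) (a := Z) hZ' (hcont _) (hcont _)).1 e1 hx
    simp only [mul_eq_zero] at this
    rcases this with h | h
    · left; linarith
    · right; linarith
  have hqp : q - p ≠ 0 := sub_ne_zero.2 hpq.symm
  have e2 : cfc f Z = cfc (fun x => (f p - (f q - f p) / (q - p) * p) + (f q - f p) / (q - p) * x) Z := by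
    apply cfc_congr
    intro x hx
    rcases hs x hx with rfl | rfl
    · simp
    · field_simp
      ring
  rw [e2, cfc_add _ _ _ (hcont _) (hcont _), cfc_const _ Z, cfc_const_mul _ _ _ (hcont _),
    cfc_id' ℝ Z]

lemma scal_aux (f : ℝ → ℝ) (hf : OpMonotone f) (u v e : ℝ) (hu : 0 < u) (he : 0 < e) :
    u ^ 2 / (u ^ 2 + v ^ 2) * f (u ^ 2 + v ^ 2) ≤ f (u ^ 2 + e ^ 2) := by
  obtain ⟨-, hf0, hf⟩ := hf
  set M : ℝ := v ^ 2 + (u * v / e) ^ 2 + (u ^ 2 + e ^ 2 + 1) with hM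
  let X : Matrix (Fin 2) (Fin 2) ℂ := !![((u ^ 2 : ℝ) : ℂ), ((u * v : ℝ) : ℂ); ((u * v : ℝ) : ℂ), ((v ^ 2 : ℝ) : ℂ)]
  let Y : Matrix (Fin 2) (Fin 2) ℂ := !![((u ^ 2 + e ^ 2 : ℝ) : ℂ), 0; 0, (M : ℂ)]
  have hX : X.PosSemidef := by
    have := Matrix.posSemidef_vecMulVec_self_star ![(u : ℂ), (v : ℂ)]
    convert this using 1
    ext i j
    fin_cases i <;> fin_cases j <;> simp [X, vecMulVec_apply] <;> ring
  have hXY : LoewnerLE X Y := by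
    have h1 := Matrix.posSemidef_vecMulVec_self_star ![(e : ℂ), ((-(u * v / e) : ℝ) : ℂ)]
    have h2 := Matrix.posSemidef_vecMulVec_self_star ![(0 : ℂ), ((Real.sqrt (u ^ 2 + e ^ 2 + 1) : ℝ) : ℂ)]
    have hsq : ((Real.sqrt (u ^ 2 + e ^ 2 + 1) : ℝ) : ℂ) * ((Real.sqrt (u ^ 2 + e ^ 2 + 1) : ℝ) : ℂ)
        = ((u ^ 2 + e ^ 2 + 1 : ℝ) : ℂ) := by
      rw [← Complex.ofReal_mul, Real.mul_self_sqrt (by positivity)]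
    have heC : (e : ℂ) ≠ 0 := by exact_mod_cast he.ne'
    unfold LoewnerLE
    convert h1.add h2 using 1
    ext i j
    fin_cases i <;> fin_cases j
    · rw [Matrix.sub_apply, Matrix.add_apply, vecMulVec_apply, vecMulVec_apply]; simp [X, Y]; ring
    · rw [Matrix.sub_apply, Matrix.add_apply, vecMulVec_apply, vecMulVec_apply]; simp [X, Y]; field_simp
    · rw [Matrix.sub_apply, Matrix.add_apply, vecMulVec_apply, vecMulVec_apply]; simp [X, Y]; field_simp
    · rw [Matrix.sub_apply, Matrix.add_apply, vecMulVec_apply, vecMulVec_apply]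
      have hd : (M : ℂ) - ((v ^ 2 : ℝ) : ℂ) = ((-(u * v / e) : ℝ) : ℂ) * ((-(u * v / e) : ℝ) : ℂ)
          + ((Real.sqrt (u ^ 2 + e ^ 2 + 1) : ℝ) : ℂ) * ((Real.sqrt (u ^ 2 + e ^ 2 + 1) : ℝ) : ℂ) := by
        rw [hsq, hM]; push_cast; ring
      simpa [X, Y] using hd
  have hYH : Y.IsHermitian := by
    ext i j
    fin_cases i <;> fin_cases j <;> simp [Y]
  have hy : 0 < u ^ 2 + v ^ 2 := by positivity
  have hne : u ^ 2 + e ^ 2 ≠ M := by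
    have : 0 ≤ (u * v / e) ^ 2 := by positivity
    nlinarith [sq_nonneg v]
  have eX := two_point f X hX.1 0 (u ^ 2 + v ^ 2) hy.ne (by
    ext i j
    fin_cases i <;> fin_cases j <;>
      simp [X, Matrix.mul_apply, Fin.sum_univ_two] <;> ring)
  have eY := two_point f Y hYH (u ^ 2 + e ^ 2) M hne (by
    ext i j
    fin_cases i <;> fin_cases j <;>
      simp [Y, Matrix.mul_apply, Fin.sum_univ_two])
  have key := (hf (Fin 2) X Y hX hXY).diag_nonneg (i := 0)
  rw [eX, eY] at key
  have key2 : 0 ≤ f (u ^ 2 + e ^ 2) - (f 0 + (f (u ^ 2 + v ^ 2) - f 0) / (u ^ 2 + v ^ 2) * u ^ 2) := by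
    have h3 : (0 : ℂ) ≤ ((f (u ^ 2 + e ^ 2) - (f 0 + (f (u ^ 2 + v ^ 2) - f 0) / (u ^ 2 + v ^ 2) * u ^ 2) : ℝ) : ℂ) := by
      convert key using 1
      simp [X, Y]
      try ring
    exact_mod_cast h3
  have h0 := hf0 0 le_rfl
  have : f 0 + (f (u ^ 2 + v ^ 2) - f 0) / (u ^ 2 + v ^ 2) * u ^ 2
      = u ^ 2 / (u ^ 2 + v ^ 2) * f (u ^ 2 + v ^ 2) + f 0 * (v ^ 2 / (u ^ 2 + v ^ 2)) := by
    field_simp; ring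
  have : 0 ≤ f 0 * (v ^ 2 / (u ^ 2 + v ^ 2)) := by positivity
  linarith

lemma scal (f : ℝ → ℝ) (hf : OpMonotone f) (K x : ℝ) (hK : 1 ≤ K) (hx : 0 ≤ x) :
    f (K * x) ≤ K * f x := by
  rcases hx.eq_or_lt with rfl | hx
  · have := hf.2.1 0 le_rfl
    simp; nlinarith
  have hK0 : 0 < K := by linarith
  have h1 : ∀ e : ℝ, 0 < e → K⁻¹ * f (K * x) ≤ f (x + e ^ 2) := by
    intro e he
    have := scal_aux f hf (Real.sqrt x) (Real.sqrt (K * x - x)) e (Real.sqrt_pos.2 hx) he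
    rw [Real.sq_sqrt hx.le, Real.sq_sqrt (by nlinarith)] at this
    convert this using 2
    · rw [add_sub_cancel]; field_simp
    · congr 1; ring
  have h2 : Filter.Tendsto (fun e : ℝ => f (x + e ^ 2)) (nhdsWithin 0 (Set.Ioi 0)) (nhds (f x)) := by
    have hc : ContinuousAt f x := hf.1.continuousAt (Ici_mem_nhds hx)
    have : Filter.Tendsto (fun e : ℝ => x + e ^ 2) (nhds 0) (nhds x) := by
      have : Continuous (fun e : ℝ => x + e ^ 2) := by fun_prop
      simpa using this.tendsto 0
    exact (hc.tendsto.comp this).mono_left nhdsWithin_le_nhds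
  have h3 : K⁻¹ * f (K * x) ≤ f x := by
    refine ge_of_tendsto h2 ?_
    filter_upwards [self_mem_nhdsWithin] with e he using h1 e he
  rwa [inv_mul_le_iff₀ hK0] at h3

open scoped MatrixOrder in
lemma gm_le_hm {n : Type} [Fintype n] [DecidableEq n]
    (A B : Matrix n n ℂ) (hA : A.PosDef) (hB : B.PosDef)
    (s t : ℝ) (hs : 0 < s) (hst : s ≤ t) (h1 : 1 ≤ s * t)
    (hsA : LoewnerLE (s • A) B) (htA : LoewnerLE B (t • A)) :
    (gmean A B).PosSemidef ∧ (hmean A B).PosSemidef ∧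
    LoewnerLE (gmean A B) (((Real.sqrt s + Real.sqrt t) / 2) • hmean A B) := by
  have hcont : ∀ (Z : Matrix n n ℂ) (g : ℝ → ℝ), ContinuousOn g (spectrum ℝ Z) :=
    fun Z g => Matrix.finite_real_spectrum.continuousOn g
  have hA0 : 0 ≤ A := Matrix.nonneg_iff_posSemidef.2 hA.posSemidef
  have hAs : IsSelfAdjoint A := hA.1
  set R := msqrt A with hR
  have hRs : IsSelfAdjoint R := cfc_predicate _ _
  have hRH : Rᴴ = R := hRs
  have hRR : R * R = A := by
    rw [hR, msqrt, ← cfc_mul _ _ A (hcont _ _) (hcont _ _)]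
    conv_rhs => rw [← cfc_id ℝ A]
    apply cfc_congr
    intro x hx
    exact Real.mul_self_sqrt (spectrum_nonneg_of_nonneg hA0 hx)
  have hRu : IsUnit R.det := by
    have : IsUnit A.det := (Matrix.isUnit_iff_isUnit_det A).1 hA.isUnit
    rw [← hRR, Matrix.det_mul] at this
    exact isUnit_of_mul_isUnit_left this
  have r1 : R * R⁻¹ = 1 := Matrix.mul_nonsing_inv R hRu
  have r2 : R⁻¹ * R = 1 := Matrix.nonsing_inv_mul R hRu
  have hRiH : (R⁻¹)ᴴ = R⁻¹ := by rw [Matrix.conjTranspose_nonsing_inv, hRH]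
  set C := R⁻¹ * B * R⁻¹ with hC
  have hRCR : R * C * R = B := by
    rw [hC]
    calc R * (R⁻¹ * B * R⁻¹) * R = (R * R⁻¹) * B * (R⁻¹ * R) := by noncomm_ring
      _ = B := by rw [r1, r2]; simp
  have hRAR : R⁻¹ * A * R⁻¹ = 1 := by
    calc R⁻¹ * A * R⁻¹ = (R⁻¹ * R) * (R * R⁻¹) := by rw [← hRR]; noncomm_ring
      _ = 1 := by rw [r1, r2]; simp
  have hCs : IsSelfAdjoint C := by
    have := (hB.posSemidef.mul_mul_conjTranspose_same R⁻¹).1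
    rw [hRiH] at this
    exact this
  have hlo : ∀ x ∈ spectrum ℝ C, s ≤ x := by
    refine (algebraMap_le_iff_le_spectrum (R := ℝ) (a := C) hCs).1 ?_
    rw [Matrix.le_iff]
    have := hsA.mul_mul_conjTranspose_same R⁻¹
    rw [hRiH, mul_sub, sub_mul, Matrix.mul_smul, Matrix.smul_mul, hRAR,
      ← Algebra.algebraMap_eq_smul_one] at this
    exact this
  have hhi : ∀ x ∈ spectrum ℝ C, x ≤ t := by
    refine (le_algebraMap_iff_spectrum_le (R := ℝ) (a := C) hCs).1 ?_
    rw [Matrix.le_iff]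
    have := htA.mul_mul_conjTranspose_same R⁻¹
    rw [hRiH, mul_sub, sub_mul, Matrix.mul_smul, Matrix.smul_mul, hRAR,
      ← Algebra.algebraMap_eq_smul_one] at this
    exact this
  set D := cfc (fun x : ℝ => 2 * x / (1 + x)) C with hD
  set E := cfc (fun x : ℝ => x⁻¹) C with hE
  have hEC : E * C = 1 := by
    rw [hE]
    conv_lhs => rw [← cfc_id ℝ C, cfc_id ℝ C]
    nth_rewrite 2 [← cfc_id ℝ C]
    rw [← cfc_mul _ _ C (hcont _ _) (hcont _ _), ← map_one (algebraMap ℝ (Matrix n n ℂ)), ← cfc_const 1 C]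
    apply cfc_congr
    intro x hx
    have := hlo x hx
    have : x ≠ 0 := by linarith
    simp [this]
  have hDE : D * ((2 : ℝ)⁻¹ • (1 + E)) = 1 := by
    have : (2 : ℝ)⁻¹ • (1 + E) = cfc (fun x : ℝ => (2 : ℝ)⁻¹ * (1 + x⁻¹)) C := by
      rw [cfc_const_mul _ _ _ (hcont _ _), cfc_add _ _ _ (hcont _ _) (hcont _ _), cfc_const 1 C, map_one]
    rw [this, hD, ← cfc_mul _ _ C (hcont _ _) (hcont _ _), ← map_one (algebraMap ℝ (Matrix n n ℂ)),
      ← cfc_const 1 C]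
    apply cfc_congr
    intro x hx
    have := hlo x hx
    have h0 : 0 < x := by linarith
    simp only
    field_simp
    ring
  have hAi : A⁻¹ = R⁻¹ * R⁻¹ := by rw [← hRR, Matrix.mul_inv_rev]
  have hBi : B⁻¹ = R⁻¹ * E * R⁻¹ := by
    rw [← hRCR, Matrix.mul_inv_rev, Matrix.mul_inv_rev, Matrix.inv_eq_left_inv hEC, mul_assoc]
  have hH : hmean A B = R * D * R := by
    unfold hmean
    apply Matrix.inv_eq_left_inv
    have e1 : (2 : ℝ)⁻¹ • (A⁻¹ + B⁻¹) = R⁻¹ * ((2 : ℝ)⁻¹ • (1 + E)) * R⁻¹ := by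
      rw [hAi, hBi, Matrix.mul_smul, Matrix.smul_mul]
      congr 1
      noncomm_ring
    rw [e1]
    calc R * D * R * (R⁻¹ * ((2 : ℝ)⁻¹ • (1 + E)) * R⁻¹)
        = R * (D * ((R * R⁻¹) * ((2 : ℝ)⁻¹ • (1 + E)))) * R⁻¹ := by simp only [mul_assoc]
      _ = 1 := by rw [r1, one_mul, hDE, mul_one, r1]
  have hG : gmean A B = R * cfc Real.sqrt C * R := rfl
  have hconj : ∀ g : ℝ → ℝ, (∀ x ∈ spectrum ℝ C, 0 ≤ g x) → (R * cfc g C * R).PosSemidef := by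
    intro g hg
    have := (Matrix.nonneg_iff_posSemidef.1 (cfc_nonneg (a := C) hg)).mul_mul_conjTranspose_same R
    rwa [hRH] at this
  refine ⟨?_, ?_, ?_⟩
  · rw [hG]; exact hconj _ fun x _ => Real.sqrt_nonneg x
  · rw [hH, hD]
    refine hconj _ fun x hx => ?_
    have := hlo x hx
    have h0 : 0 < x := by linarith
    positivity
  · unfold LoewnerLE
    set K := (Real.sqrt s + Real.sqrt t) / 2 with hK
    have : K • hmean A B - gmean A B
        = R * cfc (fun x : ℝ => K * (2 * x / (1 + x)) - Real.sqrt x) C * R := by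
      rw [hH, hG, cfc_sub _ _ C (hcont _ _) (hcont _ _), cfc_const_mul _ _ _ (hcont _ _), ← hD,
        mul_sub, sub_mul, Matrix.mul_smul, Matrix.smul_mul]
    rw [this]
    refine hconj _ fun x hx => ?_
    have hx1 := hlo x hx
    have hx2 := hhi x hx
    have h0 : 0 < x := by linarith
    have ha := Real.sqrt_le_sqrt hx1
    have hb := Real.sqrt_le_sqrt hx2
    have hab : 1 ≤ Real.sqrt s * Real.sqrt t := by
      rw [← Real.sqrt_mul hs.le]; exact Real.one_le_sqrt.2 h1
    have hu := Real.sqrt_pos.2 h0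
    have hq : x = Real.sqrt x ^ 2 := (Real.sq_sqrt h0.le).symm
    have hmain : 1 + x ≤ 2 * K * Real.sqrt x := by
      rw [hK]; nlinarith [mul_nonneg (sub_nonneg.2 ha) (sub_nonneg.2 hb)]
    rw [sub_nonneg, ← mul_div_assoc, le_div_iff₀ (by linarith)]
    calc Real.sqrt x * (1 + x) ≤ Real.sqrt x * (2 * K * Real.sqrt x) := by gcongr
      _ = 2 * K * Real.sqrt x ^ 2 := by ring
      _ = K * (2 * x) := by rw [← hq]; ring

open scoped MatrixOrder in
theorem geom_le_harm_after_map {n m : Type} [Fintype n] [DecidableEq n] [Fintype m] [DecidableEq m]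
    (Φ : Matrix n n ℂ →ₗ[ℂ] Matrix m m ℂ)
    (hΦ : ∀ X : Matrix n n ℂ, X.PosSemidef → (Φ X).PosSemidef)
    (f : ℝ → ℝ) (hf : OpMonotone f)
    (A B : Matrix n n ℂ) (hA : A.PosDef) (hB : B.PosDef)
    (s t : ℝ) (hs : 0 < s) (hst : s ≤ t) (h1 : 1 ≤ s * t)
    (hsA : LoewnerLE (s • A) B) (htA : LoewnerLE B (t • A)) :
    LoewnerLE (Φ (cfc f (gmean A B)))
      (((Real.sqrt s + Real.sqrt t) / 2) • Φ (cfc f (hmean A B))) := by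
  obtain ⟨hG, hH, hGH⟩ := gm_le_hm A B hA hB s t hs hst h1 hsA htA
  set K := (Real.sqrt s + Real.sqrt t) / 2 with hK
  have hK1 : 1 ≤ K := by
    have hab : 1 ≤ Real.sqrt s * Real.sqrt t := by
      rw [← Real.sqrt_mul hs.le]; exact Real.one_le_sqrt.2 h1
    have := Real.sqrt_nonneg s
    have := Real.sqrt_nonneg t
    nlinarith [sq_nonneg (Real.sqrt s - Real.sqrt t)]
  have hcont : ∀ (Z : Matrix n n ℂ) (g : ℝ → ℝ), ContinuousOn g (spectrum ℝ Z) :=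
    fun Z g => Matrix.finite_real_spectrum.continuousOn g
  have hHs : IsSelfAdjoint (hmean A B) := hH.1
  have step1 := hf.2.2 n _ _ hG hGH
  have step2 : cfc f (K • hmean A B) ≤ K • cfc f (hmean A B) := by
    rw [← cfc_comp_const_mul K f (hmean A B) ((Matrix.finite_real_spectrum.image _).continuousOn _) hHs,
      ← cfc_const_mul _ _ _ (hcont _ _)]
    refine (cfc_le_iff _ _ _ (hcont _ _) (hcont _ _) hHs).2 fun x hx => ?_
    exact scal f hf K x hK1 (spectrum_nonneg_of_nonneg (Matrix.nonneg_iff_posSemidef.2 hH) hx)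
  rw [Matrix.le_iff] at step2
  have h3 := hΦ _ (step2.add step1)
  unfold LoewnerLE
  convert h3 using 1
  rw [sub_add_sub_cancel, map_sub, LinearMap.map_smul_of_tower]
end
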